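/- arXiv:1906.09171 — 7 statements merged into one kernel-verified Lean document; each statement's English description precedes it below -/
import Mathlib

section
/- Let K ⊆ L be convex bodies in ℝ^d and let r ≥ 0. Then the Lebesgue measure of the outer r-layer of K is at most that of L: vol({x ∈ ℝ^d : dist(x, K) ≤ r} \ K) ≤ vol({x ∈ ℝ^d : dist(x, L) ≤ r} \ L). -/
open MeasureTheory Set in
theorem layer_halfspace_step {d : ℕ} (L : Set (EuclideanSpace ℝ (Fin d))) (hL : IsCompact L)
    (l : StrongDual ℝ (EuclideanSpace ℝ (Fin d))) (c : ℝ)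
    (hne : (L ∩ {x | l x ≤ c}).Nonempty) (r : ℝ) (hr : 0 ≤ r) :
    volume {x | Metric.infDist x (L ∩ {x | l x ≤ c}) ≤ r} + volume L ≤
      volume {x | Metric.infDist x L ≤ r} + volume (L ∩ {x | l x ≤ c}) := by
  have hScl : IsClosed {x | l x ≤ c} := isClosed_le l.continuous continuous_const
  by_cases hl : l = 0
  · obtain ⟨y, hyL, hy⟩ := hne
    have : L ∩ {x | l x ≤ c} = L := by
      apply inter_eq_left.2
      intro x _
      simpa [hl] using hy
    rw [this]
  obtain ⟨v, rfl⟩ := (InnerProductSpace.toDual ℝ (EuclideanSpace ℝ (Fin d))).surjective l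
  have hv : v ≠ 0 := by
    rintro rfl
    simp at hl
  have hv' : 0 < ‖v‖ := norm_pos_iff.2 hv
  simp only [InnerProductSpace.toDual_apply_apply] at *
  set S : Set (EuclideanSpace ℝ (Fin d)) := {x | inner ℝ v x ≤ c} with hS
  set w : EuclideanSpace ℝ (Fin d) := (r / ‖v‖) • v with hw
  have hwn : ‖w‖ = r := by
    rw [hw, norm_smul, Real.norm_of_nonneg (by positivity)]
    field_simp
  have hvw : inner ℝ v w = r * ‖v‖ := by
    rw [hw, real_inner_smul_right, real_inner_self_eq_norm_sq]
    field_simp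
  have hdisj : Disjoint {x | Metric.infDist x (L ∩ S) ≤ r} ((fun x => x + -w) ⁻¹' (L \ S)) := by
    rw [Set.disjoint_left]
    intro z hz hz'
    obtain ⟨y, hy, hyd⟩ := (hL.inter_right hScl).exists_infDist_eq_dist hne z
    have h1 : dist z y ≤ r := hyd ▸ hz
    have h2 : c < inner ℝ v (z + -w) := not_le.1 hz'.2
    have h3 : inner ℝ v y ≤ c := hy.2
    have h4 : inner ℝ v (z - y) ≤ ‖v‖ * ‖z - y‖ := real_inner_le_norm _ _
    rw [dist_eq_norm] at h1
    rw [inner_add_right, inner_neg_right, hvw] at h2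
    rw [inner_sub_right] at h4
    nlinarith
  have hm : MeasurableSet (L \ S) := hL.measurableSet.diff hScl.measurableSet
  have hsub : {x | Metric.infDist x (L ∩ S) ≤ r} ∪ ((fun x => x + -w) ⁻¹' (L \ S)) ⊆
      {x | Metric.infDist x L ≤ r} := by
    rintro z (hz | hz)
    · exact (Metric.infDist_le_infDist_of_subset inter_subset_left hne).trans hz
    · refine (Metric.infDist_le_dist_of_mem hz.1).trans ?_
      simp [hwn]
  have h1 := measure_mono (μ := volume) hsub
  rw [measure_union hdisj (hm.preimage (measurable_add_const _)), measure_preimage_add_right] at h1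
  calc _ = volume {x | Metric.infDist x (L ∩ S) ≤ r} + (volume (L ∩ S) + volume (L \ S)) := by
        rw [measure_inter_add_sdiff L hScl.measurableSet]
    _ = volume {x | Metric.infDist x (L ∩ S) ≤ r} + volume (L \ S) + volume (L ∩ S) := by
        rw [add_comm (volume (L ∩ S)), add_assoc]
    _ ≤ _ := by gcongr

open MeasureTheory Set Filter Topology in
/-- If `K ⊆ L` are convex bodies in `ℝ^d` and `r ≥ 0`, then the Lebesgue
measure of the outer `r`-layer of `K` is at most that of `L`. -/
theorem outer_layer_volume_mono (d : ℕ) (hd : 1 ≤ d)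
    (K L : Set (EuclideanSpace ℝ (Fin d)))
    (hKcpt : IsCompact K) (hKconv : Convex ℝ K) (hKint : (interior K).Nonempty)
    (hLcpt : IsCompact L) (hLconv : Convex ℝ L) (hLint : (interior L).Nonempty)
    (hKL : K ⊆ L) (r : ℝ) (hr : 0 ≤ r) :
    MeasureTheory.volume ({x : EuclideanSpace ℝ (Fin d) | Metric.infDist x K ≤ r} \ K) ≤
      MeasureTheory.volume ({x : EuclideanSpace ℝ (Fin d) | Metric.infDist x L ≤ r} \ L) := by
  have hKne : K.Nonempty := hKint.mono interior_subset
  obtain ⟨l, c, hlc⟩ := RCLike.iInter_countable_halfSpaces_eq (𝕜 := ℝ) hKconv hKcpt.isClosed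
  simp only [RCLike.re_to_real] at hlc
  have hKmem : ∀ x ∈ K, ∀ n, l n x ≤ c n := by
    intro x hx n
    rw [← hlc] at hx
    exact mem_iInter.1 hx n
  let C : ℕ → Set (EuclideanSpace ℝ (Fin d)) := fun n => {x | x ∈ L ∧ ∀ k < n, l k x ≤ c k}
  have hC0 : C 0 = L := by simp [C]
  have hCs : ∀ n, C (n + 1) = C n ∩ {x | l n x ≤ c n} := by
    intro n
    ext x
    simp only [C, mem_setOf_eq, mem_inter_iff, Nat.forall_lt_succ_right, and_assoc]
  have hKC : ∀ n, K ⊆ C n := fun n x hx => ⟨hKL hx, fun k _ => hKmem x hx k⟩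
  have hCc : ∀ n, IsCompact (C n) := by
    intro n
    induction n with
    | zero => rwa [hC0]
    | succ n ih =>
      rw [hCs]
      exact ih.inter_right (isClosed_le (l n).continuous continuous_const)
  have hCanti : Antitone C := fun m n hmn x hx => ⟨hx.1, fun k hk => hx.2 k (hk.trans_le hmn)⟩
  have hCint : ⋂ n, C n = K := by
    apply Subset.antisymm
    · intro x hx
      rw [← hlc]
      exact mem_iInter.2 fun n => (mem_iInter.1 hx (n + 1)).2 n (Nat.lt_succ_self n)
    · exact subset_iInter hKC
  have key : ∀ n, volume {x | Metric.infDist x (C n) ≤ r} + volume L ≤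
      volume {x | Metric.infDist x L ≤ r} + volume (C n) := by
    intro n
    induction n with
    | zero => rw [hC0]
    | succ n ih =>
      have h := layer_halfspace_step (C n) (hCc n) (l n) (c n)
        (by rw [← hCs]; exact hKne.mono (hKC _)) r hr
      rw [← hCs] at h
      have hfin : volume (C n) ≠ ⊤ := (hCc n).measure_lt_top.ne
      refine (ENNReal.add_le_add_iff_right hfin).1 ?_
      calc _ = (volume {x | Metric.infDist x (C (n+1)) ≤ r} + volume (C n)) + volume L := by ring
        _ ≤ (volume {x | Metric.infDist x (C n) ≤ r} + volume (C (n+1))) + volume L := by gcongr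
        _ = (volume {x | Metric.infDist x (C n) ≤ r} + volume L) + volume (C (n+1)) := by ring
        _ ≤ (volume {x | Metric.infDist x L ≤ r} + volume (C n)) + volume (C (n+1)) := by gcongr
        _ = _ := by ring
  have hlim : Tendsto (volume ∘ C) atTop (𝓝 (volume K)) := by
    have := tendsto_measure_iInter_atTop (μ := volume) (s := C)
      (fun n => (hCc n).measurableSet.nullMeasurableSet) hCanti ⟨0, (hCc 0).measure_lt_top.ne⟩
    rwa [hCint] at this
  have hmain : volume {x | Metric.infDist x K ≤ r} + volume L ≤
      volume {x | Metric.infDist x L ≤ r} + volume K := by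
    refine ge_of_tendsto' (hlim.const_add _) fun n => le_trans ?_ (key n)
    gcongr ?_ + _
    refine measure_mono fun x hx => ?_
    exact (Metric.infDist_le_infDist_of_subset (hKC n) hKne).trans hx
  have hsubK : K ⊆ {x | Metric.infDist x K ≤ r} := fun x hx => by
    simpa [Metric.infDist_zero_of_mem hx] using hr
  have hsubL : L ⊆ {x | Metric.infDist x L ≤ r} := fun x hx => by
    simpa [Metric.infDist_zero_of_mem hx] using hr
  have hKf : volume K ≠ ⊤ := hKcpt.measure_lt_top.ne
  have hLf : volume L ≠ ⊤ := hLcpt.measure_lt_top.ne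
  have eK := measure_sdiff_add_inter (μ := volume) {x | Metric.infDist x K ≤ r} hKcpt.measurableSet
  have eL := measure_sdiff_add_inter (μ := volume) {x | Metric.infDist x L ≤ r} hLcpt.measurableSet
  rw [inter_eq_right.2 hsubK] at eK
  rw [inter_eq_right.2 hsubL] at eL
  rw [← eK, ← eL] at hmain
  refine (ENNReal.add_le_add_iff_right (ENNReal.add_ne_top.2 ⟨hKf, hLf⟩)).1 ?_
  calc _ = _ := (add_assoc _ _ _).symm
    _ ≤ _ := hmain
    _ = _ := by ring
end

section
/- (Uniform Rokhlin Property.) Let (X, T, ℤ^d) be a minimal free action of ℤ^d on a compact metric space X. Then for any ε > 0 and any N ∈ ℕ there is an open set Ω ⊆ X such that the sets T^{-n}(Ω), n ∈ {0,1,…,N−1}^d, are pairwise disjoint, and limsup_{M→∞} (1/M^d) · sup_{x∈X} #{m ∈ {0,1,…,M−1}^d : T^m x ∉ ⋃_{n∈{0,1,…,N−1}^d} T^{-n}(Ω)} < ε. -/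
open Filter


noncomputable def urpQ {d : ℕ} (u : Fin d → ℝ) (k : Fin d → ℤ) : ℝ := ∑ i, (u i - (k i : ℝ)) ^ 2

lemma urpQ_nonneg {d : ℕ} (u : Fin d → ℝ) (k : Fin d → ℤ) : 0 ≤ urpQ u k :=
  Finset.sum_nonneg fun _ _ => sq_nonneg _

lemma urpQ_coord {d : ℕ} {u : Fin d → ℝ} {k : Fin d → ℤ} {D : ℕ} (h : urpQ u k ≤ (D : ℝ) ^ 2) (i : Fin d) :
    |u i - (k i : ℝ)| ≤ D := by
  have h1 : (u i - (k i : ℝ)) ^ 2 ≤ (D : ℝ) ^ 2 := le_trans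
    (Finset.single_le_sum (f := fun i => (u i - (k i : ℝ)) ^ 2) (fun _ _ => sq_nonneg _) (Finset.mem_univ i)) h
  exact abs_le_of_sq_le_sq h1 (by positivity)

lemma urpQ_finite {d : ℕ} (u : Fin d → ℝ) (D : ℕ) : {k : Fin d → ℤ | urpQ u k ≤ (D : ℝ) ^ 2}.Finite := by
  refine (Set.finite_Icc (fun i => ⌊u i⌋ - D : Fin d → ℤ) (fun i => ⌈u i⌉ + D)).subset ?_
  intro k hk
  constructor
  · intro i
    have := abs_le.1 (urpQ_coord hk i)
    have h2 := Int.floor_le (u i)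
    have : ((⌊u i⌋ - D : ℤ) : ℝ) ≤ k i := by push_cast; linarith
    exact_mod_cast this
  · intro i
    have := abs_le.1 (urpQ_coord hk i)
    have h2 := Int.le_ceil (u i)
    have : (k i : ℝ) ≤ ((⌈u i⌉ + D : ℤ) : ℝ) := by push_cast; linarith
    exact_mod_cast this

lemma urp_cover {d : ℕ} (s : (Fin d → ℤ) → ℝ) (D : ℕ) (θ : ℝ) (hθ : 0 < θ) (hs0 : ∀ k, 0 ≤ s k)
    (u : Fin d → ℝ) (hsyn : ∃ k, s k = 0 ∧ urpQ u k ≤ (D : ℝ) ^ 2) :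
    ∃ n, ∀ k, θ * urpQ u n + s n ≤ θ * urpQ u k + s k := by
  obtain ⟨k0, hk0, hk0'⟩ := hsyn
  obtain ⟨n, hn, hmin⟩ := Set.exists_min_image _ (fun k => θ * urpQ u k + s k) (urpQ_finite u D) ⟨k0, hk0'⟩
  refine ⟨n, fun k => ?_⟩
  by_cases hk : urpQ u k ≤ (D : ℝ) ^ 2
  · exact hmin k hk
  · push Not at hk
    have h1 := hmin k0 hk0'
    have h2 := hs0 k
    simp only [hk0] at h1
    nlinarith

/-- the contraction estimate -/
lemma urp_contract {d : ℕ} (s : (Fin d → ℤ) → ℝ) (θ : ℝ) (hθ : 0 < θ) (n k : Fin d → ℤ) (u u' : Fin d → ℝ)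
    (hu : θ * urpQ u n + s n ≤ θ * urpQ u k + s k) (hu' : ∀ i, u' i = n i + θ * (u i - n i)) :
    urpQ u' n + s n + (1 - θ) * ∑ i, ((k i : ℝ) - n i) ^ 2 ≤ urpQ u' k + s k := by
  have key : urpQ u' k - urpQ u' n - (1 - θ) * ∑ i, ((k i : ℝ) - n i) ^ 2 = θ * urpQ u k - θ * urpQ u n := by
    unfold urpQ
    simp only [Finset.mul_sum, ← Finset.sum_sub_distrib]
    refine Finset.sum_congr rfl fun i _ => ?_
    rw [hu']; ring
  linarith

lemma urp_shift {d : ℕ} (η R : ℝ) (hη : 0 < η) (n k : Fin d → ℤ) (u v : Fin d → ℝ)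
    (hR : ∑ i, (v i - u i) ^ 2 ≤ R) :
    urpQ u k - urpQ u n - (η / 2) * ∑ i, ((k i : ℝ) - n i) ^ 2 - 2 / η * R ≤ urpQ v k - urpQ v n := by
  have h1 : urpQ u k - urpQ u n - (η / 2) * ∑ i, ((k i : ℝ) - n i) ^ 2 - 2 / η * ∑ i, (v i - u i) ^ 2
      ≤ urpQ v k - urpQ v n := by
    unfold urpQ
    simp only [Finset.mul_sum, ← Finset.sum_sub_distrib]
    refine Finset.sum_le_sum fun i _ => ?_
    have : 0 ≤ (η / 2) * (((k i : ℝ) - n i) - 2 / η * (v i - u i)) ^ 2 := by positivity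
    have e : (η / 2) * (((k i : ℝ) - n i) - 2 / η * (v i - u i)) ^ 2 =
      (η / 2) * ((k i : ℝ) - n i) ^ 2 - 2 * ((k i : ℝ) - n i) * (v i - u i) + 2 / η * (v i - u i) ^ 2 := by
      field_simp; ring
    rw [e] at this
    nlinarith
  have : 2 / η * ∑ i, (v i - u i) ^ 2 ≤ 2 / η * R := mul_le_mul_of_nonneg_left hR (by positivity)
  linarith

def urpGood {d : ℕ} (N : ℕ) (s : (Fin d → ℤ) → ℝ) (m : Fin d → ℤ) : Prop :=
  ∃ q : Fin d → ℤ, ∀ v : Fin d → ℤ, (∀ i, |v i - m i| < (N : ℤ)) → ∀ k, k ≠ q →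
    urpQ (fun i => (v i : ℝ)) q + s q < urpQ (fun i => (v i : ℝ)) k + s k

lemma urp_good {d : ℕ} (N : ℕ) (s : (Fin d → ℤ) → ℝ) (D : ℕ) (θ K C : ℝ) (hθ : 0 < θ) (hθ1 : θ < 1)
    (hs0 : ∀ k, 0 ≤ s k) (hsyn : ∀ u, ∃ k, s k = 0 ∧ urpQ u k ≤ (D : ℝ) ^ 2)
    (hC : 4 / (1 - θ) ^ 2 * (d * (N : ℝ) ^ 2) ≤ C)
    (hsep : ∀ a b, s a < K → s b < K → a ≠ b → C < ∑ i, ((a i : ℝ) - b i) ^ 2)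
    (hK : 2 * (d * (N : ℝ) ^ 2 + D ^ 2) + D ^ 2 < K) (n : Fin d → ℤ) (u u' : Fin d → ℝ)
    (hu : ∀ k, θ * urpQ u n + s n ≤ θ * urpQ u k + s k) (hu' : ∀ i, u' i = n i + θ * (u i - n i))
    (m : Fin d → ℤ) (hm : ∀ i, (m i : ℝ) ≤ u' i ∧ u' i < m i + 1) : urpGood N s m := by
  refine ⟨n, fun v hv k hk => ?_⟩
  obtain ⟨k0, hk0, hk0'⟩ := hsyn u
  have hb := hu k0
  rw [hk0] at hb
  have hQ0 := urpQ_nonneg u n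
  have hQn : urpQ u n ≤ (D : ℝ) ^ 2 := by have := hs0 n; nlinarith
  have hsn : s n ≤ (D : ℝ) ^ 2 := by nlinarith [sq_nonneg (D : ℝ)]
  have hR : ∑ i, ((v i : ℝ) - u' i) ^ 2 ≤ d * (N : ℝ) ^ 2 := by
    have : ∀ i ∈ Finset.univ, ((v i : ℝ) - u' i) ^ 2 ≤ (N : ℝ) ^ 2 := by
      intro i _
      have h1 := abs_lt.1 (hv i)
      have h2 : (m i : ℝ) - N + 1 ≤ v i := by
        have : m i - N + 1 ≤ v i := by omega
        exact_mod_cast this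
      have h3 : (v i : ℝ) ≤ m i + N - 1 := by
        have : v i ≤ m i + N - 1 := by omega
        exact_mod_cast this
      have := hm i
      apply sq_le_sq'  <;> linarith
    simpa using Finset.sum_le_sum this
  have hN0 : 0 ≤ d * (N : ℝ) ^ 2 := by positivity
  by_cases hsk : s k < K
  · have h1 := urp_contract s θ hθ n k u u' (hu k) hu'
    have h2 := urp_shift (1 - θ) _ (by linarith) n k u' (fun i => (v i : ℝ)) hR
    have h3 := hsep k n hsk (by nlinarith [sq_nonneg (D : ℝ)]) hk
    have h4 : 2 / (1 - θ) * (d * (N : ℝ) ^ 2) < (1 - θ) / 2 * ∑ i, ((k i : ℝ) - n i) ^ 2 := by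
      have : 2 / (1 - θ) * (d * (N : ℝ) ^ 2) = (1 - θ) / 2 * (4 / (1 - θ) ^ 2 * (d * (N : ℝ) ^ 2)) := by
        have : 1 - θ ≠ 0 := by linarith
        field_simp; ring
      rw [this]
      exact mul_lt_mul_of_pos_left (by linarith) (by linarith)
    linarith
  · have h1 : urpQ (fun i => (v i : ℝ)) n ≤ 2 * (∑ i, ((v i : ℝ) - u' i) ^ 2 + urpQ u n) := by
      unfold urpQ
      rw [← Finset.sum_add_distrib, Finset.mul_sum]
      refine Finset.sum_le_sum fun i _ => ?_
      have e : (u' i - n i) ^ 2 ≤ (u i - n i) ^ 2 := by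
        rw [hu']
        have : θ ^ 2 ≤ 1 := by nlinarith
        nlinarith [mul_le_mul_of_nonneg_right this (sq_nonneg (u i - n i))]
      nlinarith [sq_nonneg ((v i - u' i) - (u' i - n i))]
    have := urpQ_nonneg (fun i => (v i : ℝ)) k
    linarith

noncomputable def urpBox (d P : ℕ) : Finset (Fin d → ℤ) := Fintype.piFinset fun _ => Finset.Ico (0 : ℤ) P

lemma mem_urpBox {d P : ℕ} (m : Fin d → ℤ) : m ∈ urpBox d P ↔ ∀ i, 0 ≤ m i ∧ m i < (P : ℤ) := by
  simp [urpBox, Fintype.mem_piFinset]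

lemma card_urpBox (d P : ℕ) : (urpBox d P).card = P ^ d := by
  simp [urpBox, Fintype.card_piFinset]

def urpCell {d : ℕ} (s : (Fin d → ℤ) → ℝ) (θ : ℝ) (n : Fin d → ℤ) : Set (Fin d → ℝ) :=
  {u | ∀ k, θ * urpQ u n + s n ≤ θ * urpQ u k + s k}

lemma urpCell_closed {d : ℕ} (s : (Fin d → ℤ) → ℝ) (θ : ℝ) (n : Fin d → ℤ) : IsClosed (urpCell s θ n) := by
  have : urpCell s θ n = ⋂ k, {u | θ * urpQ u n + s n ≤ θ * urpQ u k + s k} := by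
    ext; simp [urpCell]
  rw [this]
  refine isClosed_iInter fun k => isClosed_le ?_ ?_ <;> unfold urpQ <;> fun_prop

open MeasureTheory in
open Classical in
lemma urp_count {d : ℕ} (N : ℕ) (s : (Fin d → ℤ) → ℝ) (D : ℕ) (θ K C : ℝ) (hθ : 0 < θ) (hθ1 : θ < 1)
    (hs0 : ∀ k, 0 ≤ s k) (hsyn : ∀ u, ∃ k, s k = 0 ∧ urpQ u k ≤ (D : ℝ) ^ 2)
    (hC : 4 / (1 - θ) ^ 2 * (d * (N : ℝ) ^ 2) ≤ C)
    (hsep : ∀ a b, s a < K → s b < K → a ≠ b → C < ∑ i, ((a i : ℝ) - b i) ^ 2)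
    (hK : 2 * (d * (N : ℝ) ^ 2 + D ^ 2) + D ^ 2 < K) (P : ℕ) (hP : 4 * D ≤ P) :
    θ ^ d * ((P : ℝ) - 4 * D) ^ d ≤ ((urpBox d P).filter (fun m => urpGood N s m)).card := by
  set G := (urpBox d P).filter (fun m => urpGood N s m) with hG
  let W := urpCell s θ
  let c : (Fin d → ℤ) → (Fin d → ℝ) → (Fin d → ℝ) := fun n => AffineMap.homothety (fun i => (n i : ℝ)) θ
  have hc : ∀ n u i, c n u i = n i + θ * (u i - n i) := by
    intro n u i
    simp [c, AffineMap.homothety_apply]; ring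
  let S : Finset (Fin d → ℤ) := Fintype.piFinset fun _ => Finset.Ico (D : ℤ) (P - D)
  have hS : ∀ n, n ∈ S ↔ ∀ i, (D : ℤ) ≤ n i ∧ n i < P - D := by
    intro n; simp [S, Fintype.mem_piFinset]
  have hWQ : ∀ n, ∀ u ∈ W n, urpQ u n ≤ (D : ℝ) ^ 2 := by
    intro n u hu
    obtain ⟨k0, hk0, hk0'⟩ := hsyn u
    have hb := hu k0
    rw [hk0] at hb
    have := hs0 n
    nlinarith
  -- volume of the shrunk box
  have v1 : ENNReal.ofReal (((P : ℝ) - 4 * D) ^ d) ≤ ∑ n ∈ S, volume (W n) := by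
    have e : ENNReal.ofReal (((P : ℝ) - 4 * D) ^ d) =
        volume (Set.univ.pi fun _ : Fin d => Set.Ico (2 * D : ℝ) (P - 2 * D)) := by
      rw [Real.volume_pi_Ico]
      have hP' : (4 * D : ℝ) ≤ P := by exact_mod_cast hP
      rw [Finset.prod_const, ENNReal.ofReal_pow (by linarith)]
      simp only [Finset.card_univ, Fintype.card_fin]
      congr 2
      ring
    rw [e]
    refine le_trans (measure_mono ?_) (measure_biUnion_finset_le S W)
    intro u hu
    obtain ⟨n, hn⟩ := urp_cover s D θ hθ hs0 u (hsyn u)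
    simp only [Set.mem_iUnion]
    refine ⟨n, (hS n).2 fun i => ?_, hn⟩
    have h1 := abs_le.1 (urpQ_coord (hWQ n u hn) i)
    have h2 := hu i (Set.mem_univ i)
    simp only [Set.mem_Ico] at h2
    constructor
    · have : (D : ℝ) ≤ n i := by linarith
      exact_mod_cast this
    · have : (n i : ℝ) < P - D := by linarith
      exact_mod_cast this
  have v2 : ∀ n, volume (c n '' W n) = ENNReal.ofReal (θ ^ d) * volume (W n) := by
    intro n
    have := Measure.addHaar_image_homothety (volume : Measure (Fin d → ℝ)) (fun i => (n i : ℝ)) θ (W n)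
    rw [Module.finrank_fin_fun, abs_of_pos (by positivity)] at this
    exact this
  have hdisj : (S : Set (Fin d → ℤ)).PairwiseDisjoint fun n => c n '' W n := by
    intro n _ k _ hnk
    refine Set.disjoint_left.2 ?_
    rintro u' ⟨u, hu, rfl⟩ ⟨w, hw, hwe⟩
    have h1 := urp_contract s θ hθ n k u (c n u) (hu k) (hc n u)
    have h2 := urp_contract s θ hθ k n w (c n u) (hw n) (by rw [← hwe]; exact hc k w)
    have h3 : 0 < ∑ i, ((k i : ℝ) - n i) ^ 2 := by
      obtain ⟨i, hi⟩ := Function.ne_iff.1 hnk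
      refine Finset.sum_pos' (fun _ _ => sq_nonneg _) ⟨i, Finset.mem_univ i, ?_⟩
      have : (k i : ℝ) - n i ≠ 0 := by
        rw [sub_ne_zero]; exact_mod_cast hi.symm
      positivity
    have h4 : 0 ≤ ∑ i, ((n i : ℝ) - k i) ^ 2 := Finset.sum_nonneg fun _ _ => sq_nonneg _
    nlinarith
  have hmeas : ∀ n ∈ S, MeasurableSet (c n '' W n) := by
    intro n _
    have : c n '' W n = (fun u' : Fin d → ℝ => fun i => (n i : ℝ) + θ⁻¹ * (u' i - n i)) ⁻¹' (W n) := by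
      ext u'
      constructor
      · rintro ⟨u, hu, rfl⟩
        simp only [Set.mem_preimage]
        convert hu using 1
        ext i
        rw [hc]; field_simp; ring
      · intro h
        refine ⟨_, h, ?_⟩
        ext i
        rw [hc]; field_simp; ring
    rw [this]
    exact ((urpCell_closed s θ n).preimage (by fun_prop)).measurableSet
  have v3 : volume (⋃ n ∈ S, c n '' W n) = ∑ n ∈ S, volume (c n '' W n) :=
    measure_biUnion_finset hdisj hmeas
  have v4 : (⋃ n ∈ S, c n '' W n) ⊆ ⋃ m ∈ G, Set.univ.pi fun i => Set.Ico (m i : ℝ) (m i + 1) := by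
    intro u' hu'
    simp only [Set.mem_iUnion] at hu' ⊢
    obtain ⟨n, hn, u, hu, rfl⟩ := hu'
    have hfl : ∀ i, ((⌊c n u i⌋ : ℤ) : ℝ) ≤ c n u i ∧ c n u i < (⌊c n u i⌋ : ℤ) + 1 :=
      fun i => ⟨Int.floor_le _, Int.lt_floor_add_one _⟩
    refine ⟨fun i => ⌊c n u i⌋, ?_, fun i _ => hfl i⟩
    rw [hG, Finset.mem_filter, mem_urpBox]
    refine ⟨fun i => ?_, urp_good N s D θ K C hθ hθ1 hs0 hsyn hC hsep hK n u (c n u) hu (hc n u) _ hfl⟩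
    have h1 := abs_le.1 (urpQ_coord (hWQ n u hu) i)
    have h2 := (hS n).1 hn i
    have h3 : (D : ℝ) ≤ n i := by exact_mod_cast h2.1
    have h4 : (n i : ℝ) < P - D := by exact_mod_cast h2.2
    have hD : (0 : ℝ) ≤ D := by positivity
    rw [Int.floor_nonneg, Int.floor_lt, hc]
    constructor
    · nlinarith
    · push_cast; nlinarith
  have v5 : volume (⋃ m ∈ G, Set.univ.pi fun i => Set.Ico (m i : ℝ) (m i + 1)) ≤ (G.card : ENNReal) := by
    refine (measure_biUnion_finset_le G _).trans ?_
    simp [Real.volume_pi_Ico]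
  have fin : ENNReal.ofReal (θ ^ d * ((P : ℝ) - 4 * D) ^ d) ≤ (G.card : ENNReal) := by
    rw [ENNReal.ofReal_mul (by positivity)]
    calc _ ≤ ENNReal.ofReal (θ ^ d) * ∑ n ∈ S, volume (W n) := by gcongr
      _ = ∑ n ∈ S, volume (c n '' W n) := by simp [v2, Finset.mul_sum]
      _ ≤ _ := by rw [← v3]; exact (measure_mono v4).trans v5
  rw [← ENNReal.ofReal_natCast] at fin
  exact (ENNReal.ofReal_le_ofReal_iff (by positivity)).1 fin

section
variable {X : Type*} [MetricSpace X] [CompactSpace X]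

lemma urp_g (d : ℕ) (T : (Fin d → ℤ) → X → X)
    (hTc : ∀ n, Continuous (T n)) (hTadd : ∀ m n x, T (m + n) x = T m (T n x))
    (hmin : ∀ x : X, Dense (Set.range fun n : Fin d → ℤ => T n x))
    (hfree : ∀ (x : X) (n : Fin d → ℤ), T n x = x → n = 0) (p : X) (C : ℕ) :
    ∃ (g : X → ℝ) (D : ℕ), Continuous g ∧ (∀ x, 0 ≤ g x) ∧
      (∀ x, ∃ k : Fin d → ℤ, (∀ i, |k i| ≤ D) ∧ g (T k x) = 0) ∧
      ∀ x a b, g (T a x) < 1 → g (T b x) < 1 → a ≠ b → (C : ℝ) ^ 2 < ∑ i, ((a i : ℝ) - b i) ^ 2 := by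
  -- separated neighbourhood
  have h1 : ∀ j : Fin d → ℤ, j ≠ 0 → ∀ᶠ r in nhdsWithin (0 : ℝ) (Set.Ioi 0),
      ∀ y, dist y p < 2 * r → ¬ dist (T j y) p < 2 * r := by
    intro j hj
    have hne : T j p ≠ p := fun h => hj (hfree p j h)
    obtain ⟨A, B, hA, hB, hpA, hpB, hAB⟩ := t2_separation hne
    have hO : IsOpen ((T j) ⁻¹' A ∩ B) := (hA.preimage (hTc j)).inter hB
    obtain ⟨e, he, hball⟩ := Metric.isOpen_iff.1 hO p ⟨hpA, hpB⟩
    have : ∀ᶠ r in nhdsWithin (0 : ℝ) (Set.Ioi 0), r < e / 2 :=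
      nhdsWithin_le_nhds (Iio_mem_nhds (by positivity))
    filter_upwards [this] with r hr y hy hy'
    have i1 := hball (show y ∈ Metric.ball p e by rw [Metric.mem_ball]; linarith)
    have i2 := hball (show T j y ∈ Metric.ball p e by rw [Metric.mem_ball]; linarith)
    exact Set.disjoint_left.1 hAB i1.1 i2.2
  have h2 : ∀ᶠ r in nhdsWithin (0 : ℝ) (Set.Ioi 0), ∀ j ∈ {k : Fin d → ℤ | urpQ (0 : Fin d → ℝ) k ≤ (C : ℝ) ^ 2}, 
      j ≠ 0 → ∀ y, dist y p < 2 * r → ¬ dist (T j y) p < 2 * r := by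
    rw [Filter.eventually_all_finite (urpQ_finite 0 C)]
    intro j _
    by_cases hj : j = 0
    · simp [hj]
    · simpa [hj] using h1 j hj
  obtain ⟨r, hr, hr0⟩ := (h2.and self_mem_nhdsWithin).exists
  have hr0 : 0 < r := hr0
  -- syndetic
  have h3 : ∃ D : ℕ, ∀ x, ∃ k : Fin d → ℤ, (∀ i, |k i| ≤ D) ∧ dist (T k x) p < r := by
    obtain ⟨t, ht⟩ := isCompact_univ.elim_finite_subcover
      (fun k : Fin d → ℤ => (T k) ⁻¹' (Metric.ball p r)) (fun k => Metric.isOpen_ball.preimage (hTc k))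
      (by
        intro x _
        obtain ⟨_, hy, ⟨k, rfl⟩⟩ := (hmin x).inter_open_nonempty _ Metric.isOpen_ball ⟨p, Metric.mem_ball_self hr0⟩
        exact Set.mem_iUnion.2 ⟨k, hy⟩)
    refine ⟨∑ k ∈ t, ∑ i, (k i).natAbs, fun x => ?_⟩
    have := ht (Set.mem_univ x)
    simp only [Set.mem_iUnion] at this
    obtain ⟨k, hk, hx⟩ := this
    refine ⟨k, fun i => ?_, hx⟩
    have a1 : (k i).natAbs ≤ ∑ i, (k i).natAbs :=
      Finset.single_le_sum (f := fun i => (k i).natAbs) (fun _ _ => Nat.zero_le _) (Finset.mem_univ i)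
    have a2 : ∑ i, (k i).natAbs ≤ ∑ k ∈ t, ∑ i, (k i).natAbs :=
      Finset.single_le_sum (f := fun k : Fin d → ℤ => ∑ i, (k i).natAbs) (fun _ _ => Nat.zero_le _) hk
    rw [Int.abs_eq_natAbs]
    exact_mod_cast a1.trans a2
  obtain ⟨D, hD⟩ := h3
  refine ⟨fun y => max 0 (dist y p / r - 1), D, by fun_prop, fun x => le_max_left _ _, fun x => ?_, ?_⟩
  · obtain ⟨k, hk, hk'⟩ := hD x
    refine ⟨k, hk, max_eq_left ?_⟩
    rw [sub_nonpos, div_le_one hr0]; exact hk'.le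
  · intro x a b ha hb hab
    have conv : ∀ y, max 0 (dist y p / r - 1) < 1 → dist y p < 2 * r := by
      intro y hy
      have := (max_lt_iff.1 hy).2
      rw [sub_lt_iff_lt_add, div_lt_iff₀ hr0] at this
      linarith
    by_contra hcon
    push Not at hcon
    refine hr (b - a) ?_ (sub_ne_zero.2 hab.symm) (T a x) (conv _ ha) ?_
    · refine le_trans (le_of_eq (Finset.sum_congr rfl fun i _ => ?_)) hcon
      simp only [Pi.zero_apply, Pi.sub_apply]
      push_cast
      ring
    · rw [← hTadd, sub_add_cancel]; exact conv _ hb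

end

lemma urpQ_shift {d : ℕ} (v a k : Fin d → ℤ) :
    urpQ (fun i => (((v + a) i : ℤ) : ℝ)) (k + a) = urpQ (fun i => (v i : ℝ)) k := by
  unfold urpQ
  refine Finset.sum_congr rfl fun i _ => ?_
  simp only [Pi.add_apply]; push_cast; ring

lemma urp_bound_tendsto (d : ℕ) (θ D ε : ℝ) (h : 1 - θ ^ d < ε) :
    ∀ᶠ P : ℕ in atTop, ((P : ℝ) ^ d - θ ^ d * ((P : ℝ) - 4 * D) ^ d) / (P : ℝ) ^ d < ε := by
  have h0 : Tendsto (fun P : ℕ => 4 * D / (P : ℝ)) atTop (nhds 0) :=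
    tendsto_const_div_atTop_nhds_zero_nat _
  have h1 : Tendsto (fun P : ℕ => 1 - θ ^ d * (1 - 4 * D / (P : ℝ)) ^ d) atTop (nhds (1 - θ ^ d * (1 - 0) ^ d)) :=
    ((((tendsto_const_nhds (x := (1 : ℝ))).sub h0).pow d).const_mul _).const_sub _
  have h2 := h1.eventually (Iio_mem_nhds (show 1 - θ ^ d * (1 - 0) ^ d < ε by simpa using h))
  filter_upwards [h2, eventually_gt_atTop 0] with P hP hP0
  have hP0' : (P : ℝ) ≠ 0 := by positivity
  have : ((P : ℝ) ^ d - θ ^ d * ((P : ℝ) - 4 * D) ^ d) / (P : ℝ) ^ d = 1 - θ ^ d * (1 - 4 * D / (P : ℝ)) ^ d := by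
    have : 1 - 4 * D / (P : ℝ) = (P - 4 * D) / P := by field_simp
    rw [this, div_pow, sub_div, div_self (by positivity), mul_div_assoc]
  rw [this]
  exact hP

lemma urp_theta (d : ℕ) (ε : ℝ) (hε : 0 < ε) : ∃ θ : ℝ, 0 < θ ∧ θ < 1 ∧ 1 - θ ^ d < ε := by
  have h1 : Tendsto (fun θ : ℝ => 1 - θ ^ d) (nhdsWithin 1 (Set.Iio 1)) (nhds (1 - 1 ^ d)) :=
    ((by fun_prop : Continuous (fun θ : ℝ => 1 - θ ^ d)).tendsto 1).mono_left nhdsWithin_le_nhds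
  have h2 := h1.eventually (Iio_mem_nhds (show 1 - 1 ^ d < ε by simpa using hε))
  have h3 : ∀ᶠ θ : ℝ in nhdsWithin 1 (Set.Iio 1), 0 < θ := nhdsWithin_le_nhds (Ioi_mem_nhds one_pos)
  obtain ⟨θ, ⟨a, b⟩, c⟩ := ((h2.and h3).and self_mem_nhdsWithin).exists
  exact ⟨θ, b, c, a⟩

/-- Uniform Rokhlin Property: for a minimal free action of `ℤ^d` on a compact
metric space `X`, for any `ε > 0` and `N ∈ ℕ` there is an open set `Ω ⊆ X` such that the
sets `T^{-n}(Ω)`, `n ∈ {0,…,N-1}^d`, are pairwise disjoint and the orbit capacity of the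
complement of the tower `⋃_n T^{-n}(Ω)` is less than `ε`. -/
theorem uniform_rokhlin_property {X : Type*} [MetricSpace X] [CompactSpace X]
    (d : ℕ) (hd : 1 ≤ d) (T : (Fin d → ℤ) → X → X)
    (hTc : ∀ n, Continuous (T n)) (hT0 : ∀ x, T 0 x = x)
    (hTadd : ∀ m n x, T (m + n) x = T m (T n x))
    (hmin : ∀ x : X, Dense (Set.range fun n : Fin d → ℤ => T n x))
    (hfree : ∀ (x : X) (n : Fin d → ℤ), T n x = x → n = 0)
    (ε : ℝ) (hε : 0 < ε) (N : ℕ) (hN : 0 < N) :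
    ∃ Ω : Set X, IsOpen Ω ∧
      (∀ n n' : Fin d → ℤ, (∀ i, 0 ≤ n i ∧ n i < (N : ℤ)) → (∀ i, 0 ≤ n' i ∧ n' i < (N : ℤ)) →
        n ≠ n' → Disjoint (T (-n) '' Ω) (T (-n') '' Ω)) ∧
      Filter.limsup (fun M : ℕ =>
        (⨆ x : X, (Nat.card {m : Fin d → ℤ // (∀ i, 0 ≤ m i ∧ m i < (M : ℤ)) ∧
            T m x ∉ ⋃ n ∈ {n : Fin d → ℤ | ∀ i, 0 ≤ n i ∧ n i < (N : ℤ)}, T (-n) '' Ω} : ℝ))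
          / (M : ℝ) ^ d) Filter.atTop < ε := by
  classical
  rcases isEmpty_or_nonempty X with hX | ⟨⟨p⟩⟩
  · refine ⟨∅, isOpen_empty, by simp, ?_⟩
    simpa using hε
  obtain ⟨θ, hθ, hθ1, hθε⟩ := urp_theta d (ε / 2) (by positivity)
  obtain ⟨C, hC⟩ := exists_nat_ge (4 / (1 - θ) ^ 2 * (d * (N : ℝ) ^ 2) + 1)
  have hC0 : 0 ≤ 4 / (1 - θ) ^ 2 * (d * (N : ℝ) ^ 2) := by positivity
  have hC' : 4 / (1 - θ) ^ 2 * (d * (N : ℝ) ^ 2) ≤ (C : ℝ) ^ 2 := by nlinarith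
  obtain ⟨g, D0, hgc, hg0, hgsyn, hgsep⟩ := urp_g d T hTc hTadd hmin hfree p C
  let D : ℕ := d * (D0 + 1)
  obtain ⟨K, hK⟩ := exists_gt (2 * (d * (N : ℝ) ^ 2 + (D : ℝ) ^ 2) + (D : ℝ) ^ 2)
  have hK0 : 0 < K := lt_of_le_of_lt (by positivity) hK
  let s : X → (Fin d → ℤ) → ℝ := fun x k => K * g (T k x)
  have hs0 : ∀ x k, 0 ≤ s x k := fun x k => mul_nonneg hK0.le (hg0 _)
  have hsT : ∀ a x k, s (T a x) k = s x (k + a) := fun a x k => by simp only [s, hTadd]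
  have hsc : ∀ k, Continuous fun x => s x k := fun k => continuous_const.mul (hgc.comp (hTc k))
  have hsyn : ∀ x u, ∃ k, s x k = 0 ∧ urpQ u k ≤ (D : ℝ) ^ 2 := by
    intro x u
    obtain ⟨k, hk, hk0⟩ := hgsyn (T (fun i => ⌊u i⌋) x)
    refine ⟨k + fun i => ⌊u i⌋, by rw [← hsT]; simp only [s]; rw [hk0, mul_zero], ?_⟩
    have : ∀ i ∈ Finset.univ, (u i - ((k + fun i => ⌊u i⌋) i : ℤ)) ^ 2 ≤ ((D0 : ℝ) + 1) ^ 2 := by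
      intro i _
      have h1 := abs_le.1 (hk i)
      have h2 : -(D0 : ℝ) ≤ k i := by exact_mod_cast h1.1
      have h3 : (k i : ℝ) ≤ D0 := by exact_mod_cast h1.2
      have h4 := Int.floor_le (u i)
      have h5 := Int.lt_floor_add_one (u i)
      simp only [Pi.add_apply]; push_cast
      apply sq_le_sq' <;> linarith
    have h2 := Finset.sum_le_sum this
    unfold urpQ
    refine h2.trans ?_
    have hd' : (1 : ℝ) ≤ d := by exact_mod_cast hd
    simp only [Finset.sum_const, Finset.card_univ, Fintype.card_fin, nsmul_eq_mul, D]
    push_cast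
    rw [mul_pow]
    apply mul_le_mul_of_nonneg_right _ (by positivity)
    nlinarith
  have hsep : ∀ x a b, s x a < K → s x b < K → a ≠ b → (C : ℝ) ^ 2 < ∑ i, ((a i : ℝ) - b i) ^ 2 := by
    intro x a b ha hb hab
    have conv : ∀ a, s x a < K → g (T a x) < 1 := by
      intro a ha
      simp only [s] at ha
      by_contra hh
      push Not at hh
      nlinarith
    exact hgsep x a b (conv a ha) (conv b hb) hab
  let E : (Fin d → ℤ) → Set X := fun q => {x | ∀ v : Fin d → ℤ, (∀ i, -(N : ℤ) < v i ∧ v i ≤ 0) → ∀ k, k ≠ q →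
    urpQ (fun i => (v i : ℝ)) q + s x q < urpQ (fun i => (v i : ℝ)) k + s x k}
  have hE : ∀ q, IsOpen (E q) := by
    intro q
    have e : E q = ⋂ v ∈ {v : Fin d → ℤ | ∀ i, -(N : ℤ) < v i ∧ v i ≤ 0},
        ⋂ k ∈ {k : Fin d → ℤ | urpQ (fun i => (v i : ℝ)) k ≤ (D : ℝ) ^ 2}, {x | k ≠ q →
        urpQ (fun i => (v i : ℝ)) q + s x q < urpQ (fun i => (v i : ℝ)) k + s x k} := by
      ext x
      simp only [E, Set.mem_setOf_eq, Set.mem_iInter]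
      constructor
      · intro h v hv k _ hk
        exact h v hv k hk
      · intro h v hv k hkq
        by_cases hk : urpQ (fun i => (v i : ℝ)) k ≤ (D : ℝ) ^ 2
        · exact h v hv k hk hkq
        · push Not at hk
          obtain ⟨k0, hk0, hk0'⟩ := hsyn x (fun i => (v i : ℝ))
          have h1 : urpQ (fun i => (v i : ℝ)) q + s x q ≤ urpQ (fun i => (v i : ℝ)) k0 + s x k0 := by
            by_cases hq : k0 = q
            · rw [hq]
            · exact (h v hv k0 hk0' hq).le
          have := hs0 x k
          linarith
    rw [e]
    refine Set.Finite.isOpen_biInter ?_ fun v _ => Set.Finite.isOpen_biInter (urpQ_finite _ D) fun k _ => ?_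
    · refine (Set.finite_Icc (fun _ => -(N : ℤ) : Fin d → ℤ) (fun _ => 0)).subset fun v hv => ?_
      exact ⟨fun i => (hv i).1.le, fun i => (hv i).2⟩
    · by_cases hk : k = q
      · simp [hk]
      · simp only [ne_eq, hk, not_false_eq_true, forall_const]
        exact isOpen_lt (continuous_const.add (hsc q)) (continuous_const.add (hsc k))
  have hET : ∀ q a x, T a x ∈ E q ↔ ∀ v : Fin d → ℤ, (∀ i, -(N : ℤ) < v i ∧ v i ≤ 0) → ∀ k, k ≠ q →
      urpQ (fun i => (((v + a) i : ℤ) : ℝ)) (q + a) + s x (q + a)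
        < urpQ (fun i => (((v + a) i : ℤ) : ℝ)) (k + a) + s x (k + a) := by
    intro q a x
    simp only [E, Set.mem_setOf_eq, hsT, urpQ_shift]
  let Ω : Set X := ⋃ q ∈ {q : Fin d → ℤ | ∀ i, (N : ℤ) ∣ q i}, E q
  have hΩ : ∀ y, y ∈ Ω ↔ ∃ q : Fin d → ℤ, (∀ i, (N : ℤ) ∣ q i) ∧ y ∈ E q := by
    intro y; simp [Ω]
  have hinv : ∀ n y, T n (T (-n) y) = y := fun n y => by rw [← hTadd, add_neg_cancel, hT0]
  have hinv' : ∀ n y, T (-n) (T n y) = y := fun n y => by rw [← hTadd, neg_add_cancel, hT0]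
  refine ⟨Ω, isOpen_biUnion fun q _ => hE q, ?_, ?_⟩
  · intro n n' hn hn' hne
    refine Set.disjoint_left.2 ?_
    rintro z ⟨y, hy, rfl⟩ ⟨y', hy', hyy⟩
    apply hne
    set z := T (-n) y with hz
    have e1 : T n z ∈ Ω := by rw [hz, hinv]; exact hy
    have e2 : T n' z ∈ Ω := by rw [← hyy, hinv]; exact hy'
    obtain ⟨q, hq, hqE⟩ := (hΩ _).1 e1
    obtain ⟨q', hq', hqE'⟩ := (hΩ _).1 e2
    have f1 := (hET _ _ _).1 hqE (-n) (fun i => by have := hn i; simp only [Pi.neg_apply]; omega)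
    have f2 := (hET _ _ _).1 hqE' (-n') (fun i => by have := hn' i; simp only [Pi.neg_apply]; omega)
    have hqq : q + n = q' + n' := by
      by_contra hcon
      have g1 := f1 (q' + n' - n) (fun h => hcon (by rw [← h]; abel))
      have g2 := f2 (q + n - n') (fun h => hcon (by rw [← h]; abel))
      simp only [neg_add_cancel, sub_add_cancel] at g1 g2
      exact lt_asymm g1 g2
    ext i
    have h1 := congrFun hqq i
    simp only [Pi.add_apply] at h1
    have h2 : (N : ℤ) ∣ n i - n' i := by
      have : n i - n' i = q' i - q i := by linarith
      rw [this]
      exact dvd_sub (hq' i) (hq i)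
    have h3 := Int.eq_zero_of_abs_lt_dvd h2 (by have := hn i; have := hn' i; rw [abs_lt]; constructor <;> linarith)
    linarith
  · have hcov : ∀ x m, urpGood N (s x) m →
        T m x ∈ ⋃ n ∈ {n : Fin d → ℤ | ∀ i, 0 ≤ n i ∧ n i < (N : ℤ)}, T (-n) '' Ω := by
      rintro x m ⟨q, hq⟩
      have hNz : (0 : ℤ) < N := by exact_mod_cast hN
      let n : Fin d → ℤ := fun i => (q i - m i) % N
      have hn : ∀ i, 0 ≤ n i ∧ n i < (N : ℤ) := fun i => ⟨Int.emod_nonneg _ hNz.ne', Int.emod_lt_of_pos _ hNz⟩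
      simp only [Set.mem_iUnion]
      refine ⟨n, hn, T (n + m) x, ?_, by rw [hTadd n m, hinv']⟩
      refine (hΩ _).2 ⟨q - (n + m), fun i => ?_, (hET _ _ _).2 fun v hv k hk => ?_⟩
      · have : (q - (n + m)) i = (q i - m i) - (q i - m i) % N := by simp [n]; ring
        rw [this]
        exact Int.dvd_self_sub_emod
      · rw [sub_add_cancel]
        refine hq _ (fun i => ?_) _ (fun h => hk (by rw [← h]; abel))
        have := hn i
        have := hv i
        simp only [Pi.add_apply]
        rw [abs_lt]
        constructor <;> linarith
    set U := ⋃ n ∈ {n : Fin d → ℤ | ∀ i, 0 ≤ n i ∧ n i < (N : ℤ)}, T (-n) '' Ω with hU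
    have hcard : ∀ P : ℕ, 4 * D ≤ P → ∀ x, (Nat.card {m : Fin d → ℤ // (∀ i, 0 ≤ m i ∧ m i < (P : ℤ)) ∧ T m x ∉ U} : ℝ)
        ≤ (P : ℝ) ^ d - θ ^ d * ((P : ℝ) - 4 * D) ^ d := by
      intro P hP x
      have h1 := urp_count N (s x) D θ K _ hθ hθ1 (hs0 x) (hsyn x) hC' (hsep x) hK P hP
      have h2 := Finset.card_filter_add_card_filter_not (s := urpBox d P) (fun m => urpGood N (s x) m)
      rw [card_urpBox] at h2
      have h3 : Nat.card {m : Fin d → ℤ // (∀ i, 0 ≤ m i ∧ m i < (P : ℤ)) ∧ T m x ∉ U}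
          ≤ ((urpBox d P).filter (fun m => ¬ urpGood N (s x) m)).card := by
        rw [← Nat.card_eq_finsetCard]
        refine Nat.card_le_card_of_injective
          (fun m => ⟨m.1, Finset.mem_filter.2 ⟨(mem_urpBox _).2 m.2.1, fun h => m.2.2 (hcov x _ h)⟩⟩) ?_
        intro a b hab
        simpa [Subtype.ext_iff] using hab
      have h2' : (((urpBox d P).filter (fun m => urpGood N (s x) m)).card : ℝ) +
        ((urpBox d P).filter (fun m => ¬ urpGood N (s x) m)).card = (P : ℝ) ^ d := by exact_mod_cast h2
      have h3' : (Nat.card {m : Fin d → ℤ // (∀ i, 0 ≤ m i ∧ m i < (P : ℤ)) ∧ T m x ∉ U} : ℝ)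
          ≤ ((urpBox d P).filter (fun m => ¬ urpGood N (s x) m)).card := by exact_mod_cast h3
      linarith
    have hev := urp_bound_tendsto d θ D (ε / 2) hθε
    refine lt_of_le_of_lt (limsup_le_of_le ?_ (a := ε / 2) ?_) (by linarith)
    · refine IsBoundedUnder.isCoboundedUnder_le ⟨0, ?_⟩
      simp only [eventually_map]
      refine Eventually.of_forall fun P => ?_
      exact div_nonneg (Real.iSup_nonneg fun x => Nat.cast_nonneg _) (by positivity)
    · filter_upwards [hev, eventually_ge_atTop (4 * D)] with P hP1 hP2
      refine le_trans ?_ hP1.le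
      haveI : Nonempty X := ⟨p⟩
      exact div_le_div_of_nonneg_right (ciSup_le (hcard P hP2)) (by positivity)
end

section
/- (Two towers.) Let (X, T, ℤ^d) be a minimal free action of ℤ^d on a compact metric space X, and let N ∈ ℕ and ε > 0 be arbitrary. Then there exist integers N₀, N₁ ≥ N, open sets Ω₀, Ω₁ ⊆ X such that each of the families {T^{-m}(Ω₀) : m ∈ {0,…,N₀−1}^d} and {T^{-m}(Ω₁) : m ∈ {0,…,N₁−1}^d} consists of pairwise disjoint sets, finitely many open sets U₁, …, U_K with U₁ ∪ ⋯ ∪ U_K ⊇ X \ ⋃_{m∈{0,…,N₀−1}^d} T^{-m}(Ω₀), and elements h₁, …, h_K ∈ ℤ^d, such that: (1) T^{h_k}(U_k) ⊆ ⋃_{m∈{0,…,N₁−1}^d} T^{-m}(Ω₁) for each k = 1, …, K; (2) the index set {1, …, K} can be partitioned into at most (⌊2√d⌋+1)^d groups such that whenever k ≠ k' lie in the same group, T^{h_k}(U_k) ∩ T^{h_{k'}}(U_{k'}) = ∅; (3) for each x ∈ Ω₁ one has #{m ∈ {0,…,N₁−1}^d : T^m x ∈ ⋃_{k=1}^K T^{h_k}(U_k)}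 < ε·N₁^d. -/
namespace TwoTowers

/-- squared Euclidean length -/
noncomputable def sq {d : ℕ} (v : Fin d → ℤ) : ℝ := ∑ i, (v i : ℝ) ^ 2
/-- l1 norm -/
noncomputable def l1 {d : ℕ} (v : Fin d → ℤ) : ℝ := ∑ i, |(v i : ℝ)|
/-- dot product -/
noncomputable def dot {d : ℕ} (v w : Fin d → ℤ) : ℝ := ∑ i, (v i : ℝ) * (w i : ℝ)

/-- The half-space function between the sites `v` and `u`, weights scaled by `t`. -/
noncomputable def Dd {X : Type*} {d : ℕ} (φ : X → ℝ) (T : (Fin d → ℤ) → X → X) (t : ℝ)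
    (v u : Fin d → ℤ) (x : X) : ℝ :=
  sq u - sq v + t * ((φ (T u x))⁻¹ - (φ (T v x))⁻¹)

/-- The origin lies at depth `c` in the tile of `v`. -/
def PP {X : Type*} {d : ℕ} (φ : X → ℝ) (T : (Fin d → ℤ) → X → X) (t c : ℝ)
    (v : Fin d → ℤ) (x : X) : Prop :=
  0 < φ (T v x) ∧ ∀ u, 0 < φ (T u x) → u ≠ v → c * l1 (u - v) < Dd φ T t v u x

/-- Tower base. -/
def Tow {X : Type*} {d : ℕ} (φ : X → ℝ) (T : (Fin d → ℤ) → X → X) (t : ℝ) (N : ℕ) : Set X :=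
  {y | ∃ v : Fin d → ℤ, ∀ m : Fin d → ℤ, (∀ i, 0 ≤ m i ∧ m i < (N : ℤ)) →
    PP φ T t 0 ((fun i => (N : ℤ) * v i) + m) (T (-m) y)}

lemma l1_nonneg {d : ℕ} (v : Fin d → ℤ) : 0 ≤ l1 v :=
  Finset.sum_nonneg fun _ _ => abs_nonneg _

lemma l1_pos {d : ℕ} (v : Fin d → ℤ) (hv : v ≠ 0) : 0 < l1 v := by
  obtain ⟨i, hi⟩ := Function.ne_iff.1 hv
  refine Finset.sum_pos' (fun _ _ => abs_nonneg _) ⟨i, Finset.mem_univ _, ?_⟩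
  exact abs_pos.2 (by exact_mod_cast hi)

lemma l1_sub_le {d : ℕ} (u v : Fin d → ℤ) : l1 (u - v) ≤ l1 u + l1 v := by
  unfold l1
  rw [← Finset.sum_add_distrib]
  refine Finset.sum_le_sum fun i _ => ?_
  simp only [Pi.sub_apply, Int.cast_sub]
  exact abs_sub _ _

lemma abs_dot_le {d : ℕ} (q w : Fin d → ℤ) (B : ℝ) (hq : ∀ i, |(q i : ℝ)| ≤ B) :
    |dot q w| ≤ B * l1 w := by
  unfold dot l1
  rw [Finset.mul_sum]
  refine (Finset.abs_sum_le_sum_abs _ _).trans (Finset.sum_le_sum fun i _ => ?_)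
  rw [abs_mul]
  exact mul_le_mul_of_nonneg_right (hq i) (abs_nonneg _)

lemma sq_sub {d : ℕ} (u v : Fin d → ℤ) : sq (u - v) = sq u - 2 * dot u v + sq v := by
  unfold sq dot
  rw [Finset.mul_sum, ← Finset.sum_sub_distrib, ← Finset.sum_add_distrib]
  refine Finset.sum_congr rfl fun i _ => ?_
  simp only [Pi.sub_apply, Int.cast_sub]; ring

lemma dot_sub {d : ℕ} (q u v : Fin d → ℤ) : dot q (u - v) = dot q u - dot q v := by
  unfold dot
  rw [← Finset.sum_sub_distrib]
  refine Finset.sum_congr rfl fun i _ => ?_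
  simp only [Pi.sub_apply, Int.cast_sub]; ring

lemma sub_dot {d : ℕ} (q u v : Fin d → ℤ) : dot (u - v) q = dot u q - dot v q := by
  unfold dot
  rw [← Finset.sum_sub_distrib]
  refine Finset.sum_congr rfl fun i _ => ?_
  simp only [Pi.sub_apply, Int.cast_sub]; ring

lemma dot_comm {d : ℕ} (u v : Fin d → ℤ) : dot u v = dot v u := by
  unfold dot
  exact Finset.sum_congr rfl fun i _ => mul_comm _ _

lemma dot_self {d : ℕ} (u : Fin d → ℤ) : dot u u = sq u := by
  unfold dot sq
  exact Finset.sum_congr rfl fun i _ => by ring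

lemma finite_quad {d : ℕ} (a b : ℝ) : {u : Fin d → ℤ | sq u ≤ a + b * l1 u}.Finite := by
  obtain ⟨R, hR⟩ := exists_nat_ge (2 * a + d * b ^ 2)
  refine (Set.finite_Icc (fun _ : Fin d => -(R : ℤ)) (fun _ => (R : ℤ))).subset ?_
  intro u hu
  simp only [Set.mem_ofPred_eq] at hu
  have h1 : sq u / 2 - d * (b ^ 2 / 2) ≤ sq u - b * l1 u := by
    have : (d : ℝ) * (b ^ 2 / 2) = ∑ i : Fin d, b ^ 2 / 2 := by simp
    rw [this]
    unfold sq l1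
    rw [Finset.mul_sum, Finset.sum_div, ← Finset.sum_sub_distrib, ← Finset.sum_sub_distrib]
    refine Finset.sum_le_sum fun i _ => ?_
    have := sq_abs (u i : ℝ)
    nlinarith [sq_nonneg (|(u i : ℝ)| - b)]
  have h2 : sq u ≤ R := by linarith
  have h3 : ∀ i, |u i| ≤ (R : ℤ) := by
    intro i
    have h4 : (u i : ℝ) ^ 2 ≤ sq u :=
      Finset.single_le_sum (f := fun i => (u i : ℝ) ^ 2) (fun _ _ => sq_nonneg _)
        (Finset.mem_univ i)
    have h5 : (u i) ^ 2 ≤ (R : ℤ) := by exact_mod_cast h4.trans h2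
    have h6 : |u i| ^ 2 = u i ^ 2 := sq_abs _
    nlinarith [abs_nonneg (u i)]
  exact ⟨fun i => (abs_le.1 (h3 i)).1, fun i => (abs_le.1 (h3 i)).2⟩

lemma sep_quad {d : ℕ} (A : ℕ) (n : Fin d → ℤ) (j : Fin d) (hj : (d * A : ℤ) ≤ |n j|) :
    (A : ℝ) * l1 n ≤ sq n := by
  obtain ⟨k, -, hk⟩ := Finset.exists_max_image Finset.univ (fun i => |n i|) ⟨j, Finset.mem_univ j⟩
  have h1 : (d * A : ℝ) ≤ |(n k : ℝ)| := by
    have := hj.trans (hk j (Finset.mem_univ _))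
    exact_mod_cast this
  have h2 : l1 n ≤ d * |(n k : ℝ)| := by
    unfold l1
    refine (Finset.sum_le_card_nsmul _ _ (|(n k : ℝ)|) fun i _ => ?_).trans (by simp)
    exact_mod_cast hk i (Finset.mem_univ _)
  have h4 : (n k : ℝ) ^ 2 ≤ sq n :=
      Finset.single_le_sum (f := fun i => (n i : ℝ) ^ 2) (fun _ _ => sq_nonneg _)
        (Finset.mem_univ k)
  have := sq_abs (n k : ℝ)
  have hA : (0 : ℝ) ≤ A := Nat.cast_nonneg _
  nlinarith [abs_nonneg (n k : ℝ)]

/-- maximal coordinate -/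
lemma exists_big_coord {d : ℕ} (hd : 1 ≤ d) (n : Fin d → ℤ) :
    ∃ i, l1 n ≤ d * |(n i : ℝ)| := by
  obtain ⟨k, -, hk⟩ := Finset.exists_max_image Finset.univ (fun i => |n i|)
    ⟨⟨0, hd⟩, Finset.mem_univ _⟩
  refine ⟨k, ?_⟩
  unfold l1
  refine (Finset.sum_le_card_nsmul _ _ (|(n k : ℝ)|) fun i _ => ?_).trans (by simp)
  exact_mod_cast hk i (Finset.mem_univ _)

section act
variable {X : Type*} {d : ℕ} {φ : X → ℝ} {T : (Fin d → ℤ) → X → X}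

lemma Dd_shift (hTadd : ∀ m n x, T (m + n) x = T m (T n x)) (t : ℝ) (v u q : Fin d → ℤ) (x : X) :
    Dd φ T t (v - q) (u - q) (T q x) = Dd φ T t v u x - 2 * dot q (u - v) := by
  unfold Dd
  rw [← hTadd, ← hTadd, sub_add_cancel, sub_add_cancel, sq_sub, sq_sub, dot_sub, dot_comm u,
    dot_comm v]
  ring

lemma PP_shift (hTadd : ∀ m n x, T (m + n) x = T m (T n x)) {t c : ℝ} {v : Fin d → ℤ} {x : X}
    (h : PP φ T t c v x) (q : Fin d → ℤ) (B c' : ℝ) (hq : ∀ i, |(q i : ℝ)| ≤ B)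
    (hc : c' ≤ c - 2 * B) : PP φ T t c' (v - q) (T q x) := by
  refine ⟨?_, fun u hu huv => ?_⟩
  · rw [← hTadd, sub_add_cancel]; exact h.1
  · rw [← hTadd] at hu
    have h1 := h.2 (u + q) hu (fun h => huv (by rw [← h]; simp))
    have h2 := Dd_shift (φ := φ) hTadd t v (u + q) q x
    rw [add_sub_cancel_right] at h2
    have h3 : u - (v - q) = u + q - v := by abel
    rw [h2, h3]
    have h4 := abs_le.1 (abs_dot_le q (u + q - v) B hq)
    have h5 := l1_nonneg (u + q - v)
    nlinarith

lemma PP_mono {t c c' : ℝ} {v : Fin d → ℤ} {x : X} (h : PP φ T t c v x) (hc : c' ≤ c) :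
    PP φ T t c' v x :=
  ⟨h.1, fun u hu huv =>
    (mul_le_mul_of_nonneg_right hc (l1_nonneg _)).trans_lt (h.2 u hu huv)⟩

lemma PP_unique {t : ℝ} {v u : Fin d → ℤ} {x : X} (h : PP φ T t 0 v x) (h' : PP φ T t 0 u x) :
    v = u := by
  by_contra hne
  have h1 := h.2 u h'.1 (Ne.symm hne)
  have h2 := h'.2 v h.1 hne
  unfold Dd at h1 h2
  linarith

lemma PP_open [TopologicalSpace X] (hφ : Continuous φ) (hφ0 : ∀ x, 0 ≤ φ x)
    (hTc : ∀ n, Continuous (T n)) {t : ℝ} (ht : 0 < t) (c : ℝ)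
    (v : Fin d → ℤ) : IsOpen {x | PP φ T t c v x} := by
  rw [isOpen_iff_mem_nhds]
  intro x hx
  have hcont : ∀ u, Continuous fun y => φ (T u y) := fun u => hφ.comp (hTc u)
  set C := (φ (T v x))⁻¹ + 1 with hC
  have e1 : ∀ᶠ y in nhds x, 0 < φ (T v y) :=
    (hcont v).continuousAt.eventually (lt_mem_nhds hx.1)
  have ci : ContinuousAt (fun y => (φ (T v y))⁻¹) x := (hcont v).continuousAt.inv₀ hx.1.ne'
  have e2 : ∀ᶠ y in nhds x, (φ (T v y))⁻¹ < C :=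
    ci.eventually (gt_mem_nhds (by simp [hC]))
  have fin := finite_quad (d := d) (sq v + t * C + |c| * l1 v) (|c|)
  have e3 : ∀ᶠ y in nhds x, ∀ u ∈ {u : Fin d → ℤ | sq u ≤ (sq v + t * C + |c| * l1 v) + |c| * l1 u},
      u ≠ v → 0 < φ (T u y) * (sq u - sq v - t * (φ (T v y))⁻¹ - c * l1 (u - v)) + t := by
    rw [Filter.eventually_all_finite fin]
    intro u _
    by_cases huv : u = v
    · exact Filter.Eventually.of_forall fun _ h => absurd huv h
    have cc : ContinuousAt (fun y => φ (T u y) * (sq u - sq v - t * (φ (T v y))⁻¹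
        - c * l1 (u - v)) + t) x := by
      have := (hcont u).continuousAt (x := x)
      fun_prop
    refine (cc.eventually (lt_mem_nhds ?_)).mono fun y hy _ => hy
    rcases (hφ0 (T u x)).eq_or_lt with h0 | h0
    · simp only [← h0]; simpa using ht
    · show 0 < φ (T u x) * (sq u - sq v - t * (φ (T v x))⁻¹ - c * l1 (u - v)) + t
      have := hx.2 u h0 huv
      unfold Dd at this
      have h7 : φ (T u x) * (φ (T u x))⁻¹ = 1 := mul_inv_cancel₀ h0.ne'
      nlinarith
  filter_upwards [e1, e2, e3] with y h1 h2 h3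
  refine ⟨h1, fun u hu huv => ?_⟩
  unfold Dd
  by_cases hmem : sq u ≤ (sq v + t * C + |c| * l1 v) + |c| * l1 u
  · have h4 := h3 u hmem huv
    have h7 : φ (T u y) * (φ (T u y))⁻¹ = 1 := mul_inv_cancel₀ hu.ne'
    by_contra hle
    push Not at hle
    nlinarith
  · push Not at hmem
    have h5 : c * l1 (u - v) ≤ |c| * (l1 u + l1 v) :=
      (mul_le_mul_of_nonneg_right (le_abs_self c) (l1_nonneg _)).trans
        (mul_le_mul_of_nonneg_left (l1_sub_le u v) (abs_nonneg c))
    have h6 : 0 < (φ (T u y))⁻¹ := inv_pos.2 hu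
    nlinarith

lemma PP_exists (x : X) (hne : ∃ v, 0 < φ (T v x)) {c : ℝ} (hc : c < 0) :
    ∃ v, PP φ T 1 c v x := by
  obtain ⟨v0, hv0⟩ := hne
  set f : (Fin d → ℤ) → ℝ := fun u => sq u + (φ (T u x))⁻¹ with hf
  have fin : {u : Fin d → ℤ | 0 < φ (T u x) ∧ f u ≤ f v0}.Finite := by
    refine (finite_quad (d := d) (f v0) 0).subset fun u hu => ?_
    have : 0 < (φ (T u x))⁻¹ := inv_pos.2 hu.1
    have := hu.2
    simp only [Set.mem_ofPred_eq, hf] at *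
    linarith
  obtain ⟨v, hv, hmin⟩ := Set.exists_min_image _ f fin ⟨v0, hv0, le_rfl⟩
  refine ⟨v, hv.1, fun u hu huv => ?_⟩
  have h1 : f v ≤ f u := by
    by_cases h : f u ≤ f v0
    · exact hmin u ⟨hu, h⟩
    · exact hv.2.trans (not_le.1 h).le
  have h2 := l1_pos (u - v) (sub_ne_zero.2 huv)
  unfold Dd
  simp only [hf] at h1
  nlinarith

lemma box_finite (N : ℕ) : {m : Fin d → ℤ | ∀ i, 0 ≤ m i ∧ m i < (N : ℤ)}.Finite := by
  refine (Set.finite_Icc (fun _ : Fin d => (0 : ℤ)) (fun _ => (N : ℤ))).subset ?_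
  intro m hm
  exact ⟨fun i => (hm i).1, fun i => (hm i).2.le⟩

lemma Tow_open [TopologicalSpace X] (hφ : Continuous φ) (hφ0 : ∀ x, 0 ≤ φ x)
    (hTc : ∀ n, Continuous (T n)) {t : ℝ} (ht : 0 < t) (N : ℕ) : IsOpen (Tow φ T t N) := by
  have : Tow φ T t N = ⋃ v : Fin d → ℤ, ⋂ m ∈ {m : Fin d → ℤ | ∀ i, 0 ≤ m i ∧ m i < (N : ℤ)},
      (T (-m)) ⁻¹' {x | PP φ T t 0 ((fun i => (N : ℤ) * v i) + m) x} := by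
    ext y; simp [Tow]
  rw [this]
  exact isOpen_iUnion fun v => (box_finite N).isOpen_biInter fun m _ =>
    (PP_open hφ hφ0 hTc ht 0 _).preimage (hTc _)

lemma mem_image_neg (hT0 : ∀ x, T 0 x = x) (hTadd : ∀ m n x, T (m + n) x = T m (T n x))
    (m : Fin d → ℤ) (S : Set X) (x : X) : x ∈ T (-m) '' S ↔ T m x ∈ S := by
  constructor
  · rintro ⟨y, hy, rfl⟩
    rw [← hTadd]; simpa [hT0] using hy
  · intro h
    exact ⟨T m x, h, by rw [← hTadd]; simp [hT0]⟩

lemma Tow_disjoint (hT0 : ∀ x, T 0 x = x) (hTadd : ∀ m n x, T (m + n) x = T m (T n x)) (t : ℝ)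
    (N : ℕ) (m m' : Fin d → ℤ) (hm : ∀ i, 0 ≤ m i ∧ m i < (N : ℤ))
    (hm' : ∀ i, 0 ≤ m' i ∧ m' i < (N : ℤ)) (hne : m ≠ m') :
    Disjoint (T (-m) '' Tow φ T t N) (T (-m') '' Tow φ T t N) := by
  rw [Set.disjoint_left]
  intro x h1 h2
  rw [mem_image_neg hT0 hTadd] at h1 h2
  obtain ⟨v, hv⟩ := h1
  obtain ⟨v', hv'⟩ := h2
  have a := hv m hm
  have b := hv' m' hm'
  rw [← hTadd, neg_add_cancel, hT0] at a b
  have := PP_unique a b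
  apply hne
  funext i
  have hi := congrFun this i
  simp only [Pi.add_apply] at hi
  have h1 : ((N : ℤ) * v i + m i) % N = m i := by
    rw [Int.mul_add_emod_self_left, Int.emod_eq_of_lt (hm i).1 (hm i).2]
  have h2 : ((N : ℤ) * v' i + m' i) % N = m' i := by
    rw [Int.mul_add_emod_self_left, Int.emod_eq_of_lt (hm' i).1 (hm' i).2]
  rw [← h1, ← h2, hi]

lemma Tow_cover (hT0 : ∀ x, T 0 x = x) (hTadd : ∀ m n x, T (m + n) x = T m (T n x)) (t : ℝ)
    (N : ℕ) (hN : 0 < N) (v : Fin d → ℤ) (x : X) (h : PP φ T t (2 * N) v x) :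
    x ∈ ⋃ m ∈ {m : Fin d → ℤ | ∀ i, 0 ≤ m i ∧ m i < (N : ℤ)}, T (-m) '' Tow φ T t N := by
  have hN' : (0 : ℤ) < N := by exact_mod_cast hN
  simp only [Set.mem_iUnion]
  have hm : ∀ i, 0 ≤ v i % N ∧ v i % N < (N : ℤ) :=
    fun i => ⟨Int.emod_nonneg _ hN'.ne', Int.emod_lt_of_pos _ hN'⟩
  refine ⟨fun i => v i % N, hm, ?_⟩
  rw [mem_image_neg hT0 hTadd]
  refine ⟨fun i => v i / N, fun m' hm' => ?_⟩
  rw [← hTadd]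
  have := PP_shift hTadd h (-m' + fun i => v i % N) N 0 (fun i => ?_) (by linarith)
  · convert this using 1
    funext i
    simp only [Pi.add_apply, Pi.sub_apply, Pi.neg_apply]
    have := Int.mul_ediv_add_emod (v i) N
    linarith
  · have := hm i
    have := hm' i
    simp only [Pi.add_apply, Pi.neg_apply]
    have : |(-m' i + v i % N)| ≤ (N : ℤ) := by rw [abs_le]; constructor <;> linarith
    exact_mod_cast this

/-- contraction lemma -/
lemma PP_contract (hTadd : ∀ m n x, T (m + n) x = T m (T n x)) (N A : ℕ) (hA : 4 * N + 8 ≤ A)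
    (hsep : ∀ y n, 0 < φ y → 0 < φ (T n y) → n ≠ 0 → (A : ℝ) * l1 n ≤ sq n)
    {v : Fin d → ℤ} {x : X} (h : PP φ T 1 (-1) v x) :
    PP φ T (1 / 2) (2 * N) (fun i => v i / 2) (T (v - fun i => v i / 2) x) := by
  set w : Fin d → ℤ := fun i => v i / 2 with hw
  set q := v - w with hq
  have hwq : w = v - q := by rw [hq]; abel
  rw [hwq]
  refine ⟨?_, fun u hu huv => ?_⟩
  · rw [← hTadd, sub_add_cancel]; exact h.1
  rw [← hTadd] at hu
  have hne : u + q ≠ v := fun h => huv (by rw [← h]; simp)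
  have h1 := h.2 (u + q) hu hne
  have h2 := Dd_shift (φ := φ) hTadd (1/2) v (u + q) q x
  rw [add_sub_cancel_right] at h2
  have h3 : u - (v - q) = u + q - v := by abel
  rw [h2, h3]
  set u' := u + q
  have h4 : Dd φ T (1/2) v u' x = (1/2) * (sq u' - sq v) + (1/2) * Dd φ T 1 v u' x := by
    unfold Dd; ring
  have h5 : sq u' - sq v = sq (u' - v) + 2 * dot v (u' - v) := by
    rw [sq_sub, dot_sub, dot_self, dot_comm u']; ring
  have h6 : |dot (v - q - q) (u' - v)| ≤ 1 * l1 (u' - v) := by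
    apply abs_dot_le
    intro i
    have : |(v i - (v i - v i / 2) - (v i - v i / 2))| ≤ 1 := by rw [abs_le]; constructor <;> omega
    simp only [hq, hw, Pi.sub_apply]
    exact_mod_cast this
  rw [sub_dot, sub_dot] at h6
  have h7 := abs_le.1 h6
  have h8 : (A : ℝ) * l1 (u' - v) ≤ sq (u' - v) := by
    apply hsep (T v x) (u' - v) h.1 _ (sub_ne_zero.2 hne)
    rwa [← hTadd, sub_add_cancel]
  have h9 := l1_pos (u' - v) (sub_ne_zero.2 hne)
  have h10 : (4 * N + 8 : ℝ) ≤ A := by exact_mod_cast hA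
  have h11 := mul_le_mul_of_nonneg_right h10 h9.le
  linarith

end act

/-- counting lemma -/
lemma count {d : ℕ} (hd : 1 ≤ d) (n k₀ : ℕ) (hk : 0 < k₀) (S : Set (Fin d → ℤ))
    (hS : ∀ m ∈ S, ∀ i, 0 ≤ m i ∧ m i < (n : ℤ))
    (hdir : ∀ m ∈ S, ∃ i : Fin d, ∃ σ : ℤˣ, ∀ m' ∈ S, (∀ j, j ≠ i → m' j = m j) →
      (m' i - m i) * σ < k₀) :
    Nat.card S * n ≤ d * 2 * k₀ * n ^ d := by
  classical
  have : Nonempty (Fin d) := ⟨⟨0, hd⟩⟩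
  choose! I σ hI using hdir
  have hbox : ∀ (m : S) (a : Fin n) (j), 0 ≤ Function.update m.1 (I m.1) (a : ℤ) j ∧
      Function.update m.1 (I m.1) (a : ℤ) j < n := by
    intro m a j
    by_cases hj : j = I m.1
    · subst hj; simp
    · rw [Function.update_of_ne hj]; exact hS _ m.2 j
  have hk' : (0 : ℤ) < k₀ := by exact_mod_cast hk
  let F : S × Fin n → (Fin d × ℤˣ) × Fin k₀ × (Fin d → Fin n) := fun p =>
    ((I p.1.1, σ p.1.1),
      ⟨(p.1.1 (I p.1.1) % k₀).toNat, by
        have := Int.emod_lt_of_pos (p.1.1 (I p.1.1)) hk'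
        have := Int.emod_nonneg (p.1.1 (I p.1.1)) hk'.ne'
        omega⟩,
      fun j => ⟨(Function.update p.1.1 (I p.1.1) (p.2 : ℤ) j).toNat, by
        have := hbox p.1 p.2 j
        omega⟩)
  have hF : Function.Injective F := by
    rintro ⟨⟨m, hm⟩, a⟩ ⟨⟨m', hm'⟩, a'⟩ h
    simp only [F, Prod.mk.injEq, Fin.mk.injEq] at h
    obtain ⟨⟨hi, hs⟩, hmod, hupd⟩ := h
    have hupd' : ∀ j, Function.update m (I m) (a : ℤ) j = Function.update m' (I m') (a' : ℤ) j := by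
      intro j
      have := congrArg Fin.val (congrFun hupd j)
      simp only at this
      have h1 := hbox ⟨m, hm⟩ a j
      have h2 := hbox ⟨m', hm'⟩ a' j
      simp only at h1 h2
      omega
    have ha : a = a' := by
      have := hupd' (I m)
      rw [Function.update_self, hi, Function.update_self] at this
      exact Fin.ext (by exact_mod_cast this)
    have hoff : ∀ j, j ≠ I m → m j = m' j := by
      intro j hj
      have := hupd' j
      rwa [Function.update_of_ne hj, Function.update_of_ne (hi ▸ hj)] at this
    have hmod' : m (I m) % k₀ = m' (I m) % k₀ := by
      have h1 := Int.emod_nonneg (m (I m)) hk'.ne'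
      have h2 := Int.emod_nonneg (m' (I m)) hk'.ne'
      rw [← hi] at hmod
      omega
    have c1 := hI m hm m' hm' (fun j hj => (hoff j hj).symm)
    have c2 := hI m' hm' m hm (fun j hj => hoff j (hi ▸ hj))
    rw [← hi, ← hs] at c2
    have hdvd : (k₀ : ℤ) ∣ m' (I m) - m (I m) :=
      Int.ModEq.dvd hmod'
    have hIeq : m (I m) = m' (I m) := by
      obtain ⟨z, hz⟩ := hdvd
      have hz' : m (I m) - m' (I m) = -(k₀ * z) := by linarith
      rw [hz] at c1
      rw [hz'] at c2
      rcases Int.units_eq_one_or (σ m) with h | h <;> rw [h] at c1 c2 <;> push_cast at c1 c2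
      all_goals
        have z1 : z < 1 := by nlinarith
        have z2 : -1 < z := by nlinarith
        have : z = 0 := by omega
        subst this; linarith
    have : m = m' := by
      funext j
      by_cases hj : j = I m
      · rw [hj]; exact hIeq
      · exact hoff j hj
    subst this; subst ha; rfl
  have := Nat.card_le_card_of_injective F hF
  simpa [Nat.card_prod, Nat.card_eq_fintype_card, mul_assoc] using this


section act2
variable {X : Type*} {d : ℕ} {φ : X → ℝ} {T : (Fin d → ℤ) → X → X}

/-- boundary layer of the tile of `v` -/
def UU {X : Type*} {d : ℕ} (φ : X → ℝ) (T : (Fin d → ℤ) → X → X) (c : ℝ)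
    (v : Fin d → ℤ) : Set X :=
  {x | PP φ T 1 (-1) v x ∧ ∃ u, 0 < φ (T u x) ∧ u ≠ v ∧ Dd φ T 1 v u x < c * l1 (u - v)}

lemma UU_open [TopologicalSpace X] (hφ : Continuous φ) (hφ0 : ∀ x, 0 ≤ φ x)
    (hTc : ∀ n, Continuous (T n)) (c : ℝ) (v : Fin d → ℤ) : IsOpen (UU φ T c v) := by
  rw [isOpen_iff_mem_nhds]
  rintro x ⟨hx, u, hu, huv, hD⟩
  have hcont : ∀ u, Continuous fun y => φ (T u y) := fun u => hφ.comp (hTc u)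
  have e1 : ∀ᶠ y in nhds x, PP φ T 1 (-1) v y :=
    (PP_open hφ hφ0 hTc one_pos (-1) v).mem_nhds hx
  have e2 : ∀ᶠ y in nhds x, 0 < φ (T u y) :=
    (hcont u).continuousAt.eventually (lt_mem_nhds hu)
  have c1 : ContinuousAt (fun y => (φ (T v y))⁻¹) x := (hcont v).continuousAt.inv₀ hx.1.ne'
  have c2 : ContinuousAt (fun y => (φ (T u y))⁻¹) x := (hcont u).continuousAt.inv₀ hu.ne'
  have c3 : ContinuousAt (fun y => Dd φ T 1 v u y) x := by
    unfold Dd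
    exact continuousAt_const.add (continuousAt_const.mul (c2.sub c1))
  have e3 : ∀ᶠ y in nhds x, Dd φ T 1 v u y < c * l1 (u - v) :=
    c3.eventually (gt_mem_nhds hD)
  filter_upwards [e1, e2, e3] with y h1 h2 h3
  exact ⟨h1, u, h2, huv, h3⟩

/-- density estimate -/
lemma density (hd : 1 ≤ d) (hT0 : ∀ x, T 0 x = x)
    (hTadd : ∀ m n x, T (m + n) x = T m (T n x)) (N A c : ℕ) (hA : 4 * N + 8 ≤ A)
    (hsep : ∀ y n, 0 < φ y → 0 < φ (T n y) → n ≠ 0 → (A : ℝ) * l1 n ≤ sq n)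
    (x : X) (S : Set (Fin d → ℤ)) (hS : ∀ m ∈ S, ∀ i, 0 ≤ m i ∧ m i < (N : ℤ))
    (hS' : ∀ m ∈ S, ∃ v, T m x ∈ T (v - fun i => v i / 2) '' UU φ T c v) :
    Nat.card S * N ≤ d * 2 * (d * (c + 3)) * N ^ d := by
  apply count hd _ _ (by positivity) S hS
  -- common site
  have key : ∀ m ∈ S, ∃ v : Fin d → ℤ, T (m - (v - fun i => v i / 2)) x ∈ UU φ T c v ∧
      PP φ T (1/2) 0 ((fun i => v i / 2) + m) x := by
    intro m hm
    obtain ⟨v, z, hz, hzm⟩ := hS' m hm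
    refine ⟨v, ?_, ?_⟩
    · rw [sub_eq_neg_add, hTadd, ← hzm, ← hTadd, neg_add_cancel, hT0]
      exact hz
    · have h1 := PP_contract hTadd N A hA hsep hz.1
      rw [hzm] at h1
      have h2 := PP_shift hTadd h1 (-m) N 0 (fun i => ?_) (by linarith)
      · rw [← hTadd, neg_add_cancel, hT0, sub_neg_eq_add] at h2
        exact h2
      · have := hS m hm i
        simp only [Pi.neg_apply, Int.cast_neg, abs_neg]
        have : |m i| ≤ (N : ℤ) := by rw [abs_le]; constructor <;> linarith
        exact_mod_cast this
  intro m hm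
  obtain ⟨v, ⟨hv, u, hu, huv, hD⟩, hP⟩ := key m hm
  obtain ⟨i, hi⟩ := exists_big_coord hd (u - v)
  have hσ : ∃ σ : ℤˣ, |(u - v) i| = (u - v) i * σ := by
    rcases le_total 0 ((u - v) i) with h | h
    · exact ⟨1, by rw [abs_of_nonneg h]; simp⟩
    · exact ⟨-1, by rw [abs_of_nonpos h]; simp⟩
  obtain ⟨σ, hσ⟩ := hσ
  refine ⟨i, σ, fun m' hm' hoff => ?_⟩
  by_contra hk
  push Not at hk
  obtain ⟨v', ⟨hv', -⟩, hP'⟩ := key m' hm'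
  have hn := PP_unique hP hP'
  set z := T (m - (v - fun i => v i / 2)) x with hz
  set q : Fin d → ℤ := v - v' with hq
  have hni : ∀ j, v j / 2 + m j = v' j / 2 + m' j := fun j => congrFun hn j
  have hz' : T (m' - (v' - fun i => v' i / 2)) x = T q z := by
    rw [hz, ← hTadd]
    congr 1
    funext j
    have := hni j
    simp only [hq, Pi.add_apply, Pi.sub_apply]
    linarith
  rw [hz'] at hv'
  have hvq : v' = v - q := by rw [hq]; abel
  rw [hvq] at hv'
  have h1 := hv'.2 (u - q) (by rw [← hTadd, sub_add_cancel]; exact hu)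
    (fun h => huv (sub_left_injective h))
  rw [Dd_shift hTadd, sub_sub_sub_cancel_right] at h1
  set a := u - v with ha
  have h2 : |dot (q - (m' - m) - (m' - m)) a| ≤ 1 * l1 a := by
    apply abs_dot_le
    intro j
    have := hni j
    have : |(v j - v' j - (m' j - m j) - (m' j - m j))| ≤ 1 := by
      rw [abs_le]; constructor <;> omega
    simp only [hq, Pi.sub_apply]
    exact_mod_cast this
  rw [sub_dot, sub_dot] at h2
  have h3 := abs_le.1 h2
  have h4 : dot (m' - m) a = ((m' i - m i : ℤ) : ℝ) * (a i : ℝ) := by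
    unfold dot
    rw [Finset.sum_eq_single i]
    · simp
    · intro j _ hj
      simp [hoff j hj]
    · simp
  have h5 : ((d * (c + 3) : ℕ) : ℤ) * |a i| ≤ (m' i - m i) * a i := by
    have e : (m' i - m i) * a i = ((m' i - m i) * σ) * (a i * σ) := by
      rcases Int.units_eq_one_or σ with h | h <;> rw [h] <;> push_cast <;> ring
    rw [e, ← hσ]
    exact mul_le_mul_of_nonneg_right hk (abs_nonneg _)
  have h6 : ((d * (c + 3) : ℕ) : ℝ) * |(a i : ℝ)| ≤ dot (m' - m) a := by
    rw [h4]; exact_mod_cast h5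
  push_cast at h6
  have h7 : ((c : ℝ) + 3) * l1 a ≤ dot (m' - m) a := by
    have : (0 : ℝ) ≤ c := Nat.cast_nonneg _
    nlinarith
  have h8 := l1_pos a (sub_ne_zero.2 huv)
  have : (0 : ℝ) ≤ c := Nat.cast_nonneg _
  nlinarith

lemma exists_phi [MetricSpace X] (x0 : X)
    (hTc : ∀ n, Continuous (T n))
    (hfree : ∀ (x : X) (n : Fin d → ℤ), T n x = x → n = 0) (A : ℕ) :
    ∃ φ : X → ℝ, Continuous φ ∧ (∀ x, 0 ≤ φ x) ∧ 0 < φ x0 ∧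
      ∀ y n, 0 < φ y → 0 < φ (T n y) → n ≠ 0 → (A : ℝ) * l1 n ≤ sq n := by
  have fin := (Set.finite_Icc (fun _ : Fin d => -((d * A : ℕ) : ℤ)) (fun _ => ((d * A : ℕ) : ℤ)))
  have ev : ∀ᶠ p in nhds (x0, x0), ∀ n ∈ Set.Icc (fun _ : Fin d => -((d * A : ℕ) : ℤ))
      (fun _ => ((d * A : ℕ) : ℤ)), n ≠ 0 → T n p.1 ≠ p.2 := by
    rw [Filter.eventually_all_finite fin]
    intro n _
    by_cases h0 : n = 0
    · exact Filter.Eventually.of_forall fun _ h => absurd h0 h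
    have op : IsOpen {p : X × X | T n p.1 ≠ p.2} :=
      isOpen_ne_fun ((hTc n).comp continuous_fst) continuous_snd
    have hmem : (x0, x0) ∈ {p : X × X | T n p.1 ≠ p.2} := fun h => h0 (hfree _ _ h)
    filter_upwards [op.mem_nhds hmem] with p hp _
    exact hp
  obtain ⟨δ, hδ, hball⟩ := Metric.eventually_nhds_iff.1 ev
  refine ⟨fun y => max 0 (δ - dist y x0), by fun_prop, fun _ => le_max_left _ _, by simpa using hδ,
    ?_⟩
  intro y n hy hn h0
  have hy' : dist y x0 < δ := by simpa using hy
  have hn' : dist (T n y) x0 < δ := by simpa using hn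
  by_contra hlt
  have : n ∈ Set.Icc (fun _ : Fin d => -((d * A : ℕ) : ℤ)) (fun _ => ((d * A : ℕ) : ℤ)) := by
    have : ∀ j, |n j| ≤ ((d * A : ℕ) : ℤ) := by
      intro j
      by_contra h
      exact hlt (sep_quad A n j (by push_cast at h; linarith))
    exact ⟨fun j => (abs_le.1 (this j)).1, fun j => (abs_le.1 (this j)).2⟩
  exact hball (y := (y, T n y)) (by rw [Prod.dist_eq]; exact max_lt hy' hn') n this h0 rfl

end act2

end TwoTowers

open TwoTowers in
/-- Two towers: for a minimal free action of `ℤ^d` on a compact metric space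
`X`, and any `N ∈ ℕ`, `ε > 0`, there exist two Rokhlin towers of heights `N₀, N₁ ≥ N` with
open bases `Ω₀, Ω₁`, an open cover `U₁, …, U_K` of the complement of the first tower, and
`h₁, …, h_K ∈ ℤ^d`, such that (1) each `T^{h_k}(U_k)` is contained in the second tower;
(2) the indices can be split into at most `(⌊2√d⌋+1)^d` groups with the translates in each
group pairwise disjoint; (3) for each `x ∈ Ω₁`, the number of `m ∈ {0,…,N₁-1}^d` with
`T^m x ∈ ⋃_k T^{h_k}(U_k)` is less than `ε·N₁^d`. -/
theorem two_towers {X : Type*} [MetricSpace X] [CompactSpace X]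
    (d : ℕ) (hd : 1 ≤ d) (T : (Fin d → ℤ) → X → X)
    (hTc : ∀ n, Continuous (T n)) (hT0 : ∀ x, T 0 x = x)
    (hTadd : ∀ m n x, T (m + n) x = T m (T n x))
    (hmin : ∀ x : X, Dense (Set.range fun n : Fin d → ℤ => T n x))
    (hfree : ∀ (x : X) (n : Fin d → ℤ), T n x = x → n = 0)
    (N : ℕ) (hN : 0 < N) (ε : ℝ) (hε : 0 < ε) :
    ∃ (N₀ N₁ : ℕ) (Ω₀ Ω₁ : Set X) (K : ℕ) (U : Fin K → Set X) (h : Fin K → (Fin d → ℤ)),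
      N ≤ N₀ ∧ N ≤ N₁ ∧ IsOpen Ω₀ ∧ IsOpen Ω₁ ∧
      (∀ m m' : Fin d → ℤ, (∀ i, 0 ≤ m i ∧ m i < (N₀ : ℤ)) → (∀ i, 0 ≤ m' i ∧ m' i < (N₀ : ℤ)) →
        m ≠ m' → Disjoint (T (-m) '' Ω₀) (T (-m') '' Ω₀)) ∧
      (∀ m m' : Fin d → ℤ, (∀ i, 0 ≤ m i ∧ m i < (N₁ : ℤ)) → (∀ i, 0 ≤ m' i ∧ m' i < (N₁ : ℤ)) →
        m ≠ m' → Disjoint (T (-m) '' Ω₁) (T (-m') '' Ω₁)) ∧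
      (∀ k, IsOpen (U k)) ∧
      (Set.univ \ (⋃ m ∈ {m : Fin d → ℤ | ∀ i, 0 ≤ m i ∧ m i < (N₀ : ℤ)}, T (-m) '' Ω₀) ⊆
        ⋃ k, U k) ∧
      (∀ k, T (h k) '' U k ⊆
        ⋃ m ∈ {m : Fin d → ℤ | ∀ i, 0 ≤ m i ∧ m i < (N₁ : ℤ)}, T (-m) '' Ω₁) ∧
      (∃ G : Fin K → Fin ((Nat.floor (2 * Real.sqrt d) + 1) ^ d),
        ∀ k k', k ≠ k' → G k = G k' → Disjoint (T (h k) '' U k) (T (h k') '' U k')) ∧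
      (∀ x ∈ Ω₁, (Nat.card {m : Fin d → ℤ // (∀ i, 0 ≤ m i ∧ m i < (N₁ : ℤ)) ∧
          T m x ∈ ⋃ k, T (h k) '' U k} : ℝ) < ε * (N₁ : ℝ) ^ d) := by
  rcases isEmpty_or_nonempty X with hX | ⟨⟨x0⟩⟩
  · refine ⟨N, N, ∅, ∅, 0, fun _ => ∅, fun _ => 0, le_rfl, le_rfl, isOpen_empty, isOpen_empty,
      ?_, ?_, fun _ => isOpen_empty, fun x => hX.elim x, fun k => k.elim0,
      ⟨fun k => k.elim0, fun k => k.elim0⟩, fun x => hX.elim x⟩ <;> simp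
  obtain ⟨c, hc⟩ : ∃ c : ℕ, c = 2 * N + 1 := ⟨_, rfl⟩
  obtain ⟨R, hR⟩ := exists_nat_gt ((d * 2 * (d * (c + 3)) : ℕ) / ε : ℝ)
  obtain ⟨N₁, hN₁⟩ : ∃ N₁ : ℕ, N₁ = N + R := ⟨_, rfl⟩
  have hN₁0 : 0 < N₁ := by omega
  obtain ⟨φ, hφ, hφ0, hφx, hsep⟩ := exists_phi (T := T) x0 hTc hfree (4 * N₁ + 8)
  have hsite : ∀ x, ∃ v, 0 < φ (T v x) := by
    intro x
    obtain ⟨y, ⟨v, rfl⟩, hy⟩ := (hmin x).exists_mem_open (isOpen_lt continuous_const hφ) ⟨x0, hφx⟩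
    exact ⟨v, hy⟩
  obtain ⟨F, hF⟩ := isCompact_univ.elim_finite_subcover
    (fun v : Fin d → ℤ => {x | PP φ T 1 (-1) v x})
    (fun v => PP_open hφ hφ0 hTc one_pos (-1) v)
    (fun x _ => Set.mem_iUnion.2 (PP_exists x (hsite x) (by norm_num)))
  let e := F.equivFin
  let vv : Fin F.card → (Fin d → ℤ) := fun k => (e.symm k).1
  have hvv : Function.Injective vv := Subtype.val_injective.comp e.symm.injective
  have hcol : 2 ^ d ≤ (Nat.floor (2 * Real.sqrt d) + 1) ^ d := by
    apply Nat.pow_le_pow_left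
    have : 1 ≤ Nat.floor (2 * Real.sqrt d) := by
      apply Nat.le_floor
      have : (1 : ℝ) ≤ Real.sqrt d := Real.one_le_sqrt.2 (by exact_mod_cast hd)
      push_cast
      linarith
    omega
  refine ⟨N, N₁, Tow φ T 1 N, Tow φ T (1/2) N₁, F.card, fun k => UU φ T c (vv k),
    fun k => vv k - fun i => vv k i / 2, le_rfl, by omega, Tow_open hφ hφ0 hTc one_pos N,
    Tow_open hφ hφ0 hTc (by norm_num) N₁,
    fun m m' hm hm' hne => Tow_disjoint hT0 hTadd 1 N m m' hm hm' hne,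
    fun m m' hm hm' hne => Tow_disjoint hT0 hTadd (1/2) N₁ m m' hm hm' hne,
    fun k => UU_open hφ hφ0 hTc c _, ?_, ?_, ?_, ?_⟩
  · rintro x ⟨-, hx⟩
    obtain ⟨v, hvF, hv⟩ := Set.mem_iUnion₂.1 (hF (Set.mem_univ x))
    refine Set.mem_iUnion.2 ⟨e ⟨v, hvF⟩, ?_⟩
    have : vv (e ⟨v, hvF⟩) = v := by simp [vv]
    rw [this]
    refine ⟨hv, ?_⟩
    by_contra hno
    push Not at hno
    apply hx
    apply Tow_cover hT0 hTadd 1 N hN v x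
    refine ⟨hv.1, fun u hu huv => ?_⟩
    have h1 := hno u hu huv
    have h2 := l1_pos (u - v) (sub_ne_zero.2 huv)
    rw [hc] at h1
    push_cast at h1
    linarith
  · rintro k _ ⟨z, hz, rfl⟩
    exact Tow_cover hT0 hTadd (1/2) N₁ hN₁0 _ _ (PP_contract hTadd N₁ _ le_rfl hsep hz.1)
  · refine ⟨fun k => Fin.castLE hcol (finFunctionFinEquiv fun i =>
      (⟨(vv k i % 2).toNat, by omega⟩ : Fin 2)), fun k k' hkk hG => ?_⟩
    rw [Set.disjoint_left]
    rintro _ ⟨z, hz, rfl⟩ ⟨z', hz', hzz⟩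
    have h1 := PP_contract hTadd N₁ _ le_rfl hsep hz.1
    have h2 := PP_contract hTadd N₁ _ le_rfl hsep hz'.1
    rw [hzz] at h2
    have h3 := PP_unique (PP_mono h1 (by positivity)) (PP_mono h2 (by positivity))
    have h4 := finFunctionFinEquiv.injective (Fin.castLE_injective hcol hG)
    apply hkk
    apply hvv
    funext i
    have h5 := congrArg Fin.val (congrFun h4 i)
    have h6 := congrFun h3 i
    simp only at h5 h6
    omega
  · intro x _
    have h1 := density hd hT0 hTadd N₁ _ c le_rfl hsep x
      {m : Fin d → ℤ | (∀ i, 0 ≤ m i ∧ m i < (N₁ : ℤ)) ∧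
          T m x ∈ ⋃ k, T (vv k - fun i => vv k i / 2) '' UU φ T c (vv k)}
      (fun m hm => hm.1) (fun m hm => by
        obtain ⟨k, hk⟩ := Set.mem_iUnion.1 hm.2
        exact ⟨vv k, hk⟩)
    rw [div_lt_iff₀ hε] at hR
    have h2 : ((d * 2 * (d * (c + 3)) : ℕ) : ℝ) < N₁ * ε := by
      have : (R : ℝ) ≤ N₁ := by rw [hN₁]; push_cast; linarith [(Nat.cast_nonneg N : (0 : ℝ) ≤ N)]
      nlinarith
    have hNr : (0 : ℝ) < N₁ := by exact_mod_cast hN₁0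
    have hpow : (0 : ℝ) < (N₁ : ℝ) ^ d := by positivity
    have h3 := (Nat.cast_le (α := ℝ)).2 h1
    rw [Nat.cast_mul, Nat.cast_mul (_ * _) (N₁ ^ d), Nat.cast_pow] at h3
    have h4 := h3.trans_lt (mul_lt_mul_of_pos_right h2 hpow)
    have h5 : (N₁ * ε : ℝ) * N₁ ^ d = (ε * N₁ ^ d) * N₁ := by ring
    rw [h5] at h4
    exact lt_of_mul_lt_mul_right h4 hNr.le
end

section
/- Let X be a compact metric space and let U₁, …, U_K ⊆ X be open sets that can be partitioned into M groups such that the sets within each group are pairwise disjoint. For each open set U ⊆ X choose a continuous function φ_U : X → [0, ∞) with U = φ_U^{-1}((0, ∞)). Then, in the C*-algebra M_{K+M}(C(X)) of (K+M)×(K+M) matrices over C(X), the diagonal element diag(φ_{U₁}, …, φ_{U_K}, 0, …, 0) is Cuntz subequivalent to the diagonal element diag(φ_{U₁∪⋯∪U_K}, …, φ_{U₁∪⋯∪U_K}, 0, …, 0) having M copies of φ_{U₁∪⋯∪U_K} on the diagonal. -/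
open Filter

/-- `a` is Cuntz subequivalent to `b`: there are sequences `(xᵢ)`, `(yᵢ)` with
`xᵢ * b * yᵢ → a`. -/
def CuntzSubequiv {B : Type*} [Mul B] [TopologicalSpace B] (a b : B) : Prop :=
  ∃ x y : ℕ → B, Filter.Tendsto (fun i => x i * b * y i) Filter.atTop (nhds a)

/-- The complex-valued continuous function associated with a real-valued one. -/
noncomputable def cplx {X : Type*} [TopologicalSpace X] (f : C(X, ℝ)) : C(X, ℂ) :=
  (⟨Complex.ofReal, Complex.continuous_ofReal⟩ : C(ℝ, ℂ)).comp f

theorem aux_conv {X : Type*} [TopologicalSpace X] [CompactSpace X] (f g : C(X, ℝ))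
    (hf : ∀ x, 0 ≤ f x) (hg : ∀ x, 0 ≤ g x) (h : ∀ x, 0 < f x → 0 < g x) :
    ∃ s : ℕ → C(X, ℝ), (∀ i x, f x = 0 → s i x = 0) ∧
      Filter.Tendsto (fun i => s i * g * f) Filter.atTop (nhds f) := by
  have hpos : ∀ (i : ℕ) x, 0 < 1 + (i : ℝ) * (f x * g x) := fun i x => by
    have := mul_nonneg (hf x) (hg x)
    positivity
  refine ⟨fun i => ⟨fun x => (i : ℝ) * f x / (1 + (i : ℝ) * (f x * g x)), ?_⟩, ?_, ?_⟩
  · exact Continuous.div (by fun_prop) (by fun_prop) (fun x => (hpos i x).ne')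
  · intro i x hx
    simp [hx]
  · apply ContinuousMap.tendsto_of_monotone_of_pointwise
    · intro i j hij x
      simp only [ContinuousMap.mul_apply, ContinuousMap.coe_mk]
      have hij' : (i : ℝ) ≤ j := by exact_mod_cast hij
      have h1 : (i : ℝ) * f x / (1 + (i : ℝ) * (f x * g x)) ≤
          (j : ℝ) * f x / (1 + (j : ℝ) * (f x * g x)) := by
        rw [div_le_div_iff₀ (hpos i x) (hpos j x)]
        nlinarith [mul_le_mul_of_nonneg_right hij' (hf x)]
      exact mul_le_mul_of_nonneg_right (mul_le_mul_of_nonneg_right h1 (hg x)) (hf x)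
    · intro x
      simp only [ContinuousMap.mul_apply, ContinuousMap.coe_mk]
      rcases (hf x).eq_or_lt with h0 | h0
      · simp [← h0]
      · have hc : 0 < f x * g x := mul_pos h0 (h x h0)
        have h2 : Filter.Tendsto (fun i : ℕ => 1 + (i : ℝ) * (f x * g x))
            Filter.atTop Filter.atTop :=
          Filter.tendsto_atTop_add_const_left _ _
            (tendsto_natCast_atTop_atTop.atTop_mul_const hc)
        have h3 := (h2.inv_tendsto_atTop.const_mul (f x)).const_sub (f x)
        rw [mul_zero, sub_zero] at h3
        refine h3.congr fun i => ?_
        have := (hpos i x).ne'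
        have e := inv_mul_cancel₀ this
        simp only [Pi.inv_apply]
        rw [div_eq_mul_inv]
        generalize (1 + (i : ℝ) * (f x * g x))⁻¹ = d at e ⊢
        linear_combination (-f x) * e

theorem aux_matrix {X n : Type*} [TopologicalSpace X] [CompactSpace X] [Fintype n] [DecidableEq n]
    (F : n → C(X, ℝ)) (g : C(X, ℝ)) (B : n → C(X, ℂ)) (γ : n → n)
    (hF : ∀ j x, 0 ≤ F j x) (hg : ∀ x, 0 ≤ g x) (h : ∀ j x, 0 < F j x → 0 < g x)
    (hB : ∀ j, B (γ j) = cplx g)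
    (hd : ∀ j j', j ≠ j' → γ j = γ j' → ∀ x, F j x = 0 ∨ F j' x = 0) :
    CuntzSubequiv (Matrix.diagonal fun j => cplx (F j)) (Matrix.diagonal B) := by
  choose s hs0 hs using fun j => aux_conv (F j) g (hF j) hg (h j)
  refine ⟨fun i => Matrix.of fun j m => if γ j = m then cplx (s j i) else 0,
    fun i => Matrix.of fun m j => if γ j = m then cplx (F j) else 0, ?_⟩
  refine tendsto_pi_nhds.2 ?_
  intro j
  refine tendsto_pi_nhds.2 ?_
  intro j'
  have key : ∀ i, ((Matrix.of fun j m => if γ j = m then cplx (s j i) else 0) *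
      Matrix.diagonal B * (Matrix.of fun m j => if γ j = m then cplx (F j) else 0)) j j' =
      if γ j' = γ j then cplx (s j i * g * F j') else 0 := by
    intro i
    simp only [Matrix.mul_apply, Matrix.mul_diagonal, Matrix.of_apply, ite_mul, zero_mul,
      Finset.sum_ite_eq, Finset.mem_univ, if_true, hB, mul_ite, mul_zero]
    split_ifs with hh
    · rw [hh, Matrix.diagonal_apply_eq, hB]
      ext x
      simp [cplx]
    · rw [Matrix.diagonal_apply_ne _ (Ne.symm hh), mul_zero, zero_mul]
  simp only [key]
  by_cases hj : j = j'
  · subst hj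
    simp only [if_true, Matrix.diagonal_apply_eq]
    exact ((ContinuousMap.continuous_postcomp _).tendsto _).comp (hs j)
  · rw [Matrix.diagonal_apply_ne _ hj]
    refine tendsto_const_nhds.congr fun i => ?_
    split_ifs with hh
    · ext x
      rcases hd j j' hj hh.symm x with h1 | h1
      · simp [cplx, hs0 j i x h1]
      · simp [cplx, h1]
    · rfl

/-- let `U₁, …, U_K ⊆ X` be open sets partitioned into `M` groups of
pairwise disjoint sets, let `φ_{U_k}` (here `f k`) be nonnegative continuous functions
with open support `U k`, and let `φ_{U₁∪⋯∪U_K}` (here `g`) have open support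
`U₁ ∪ ⋯ ∪ U_K`.  Then in `M_{K+M}(C(X))` the diagonal element
`diag(φ_{U₁}, …, φ_{U_K}, 0, …, 0)` is Cuntz subequivalent to the diagonal element
with `M` copies of `φ_{U₁∪⋯∪U_K}` and zeros elsewhere. -/
theorem cuntz_overlap {X : Type*} [MetricSpace X] [CompactSpace X]
    (K M : ℕ) (hK : 0 < K) (hM : 0 < M)
    (U : Fin K → Set X) (hUopen : ∀ k, IsOpen (U k))
    (G : Fin K → Fin M)
    (hdisj : ∀ k k', k ≠ k' → G k = G k' → Disjoint (U k) (U k'))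
    (f : Fin K → C(X, ℝ)) (hf0 : ∀ k x, 0 ≤ f k x)
    (hfU : ∀ k, U k = {x | 0 < f k x})
    (g : C(X, ℝ)) (hg0 : ∀ x, 0 ≤ g x)
    (hgU : (⋃ k, U k) = {x | 0 < g x}) :
    CuntzSubequiv
      (Matrix.diagonal (fun j : Fin (K + M) =>
        if h : (j : ℕ) < K then cplx (f ⟨j, h⟩) else 0))
      (Matrix.diagonal (fun j : Fin (K + M) =>
        if (j : ℕ) < M then cplx g else 0)) := by
  have hle : ∀ m : Fin M, (m : ℕ) < K + M := fun m => by omega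
  have hsub : ∀ k x, 0 < f k x → 0 < g x := fun k x hx => by
    have : x ∈ ⋃ k, U k := Set.mem_iUnion.2 ⟨k, by rw [hfU k]; exact hx⟩
    rw [hgU] at this
    exact this
  have := aux_matrix (fun j : Fin (K + M) => if h : (j : ℕ) < K then f ⟨j, h⟩ else 0) g
    (fun j : Fin (K + M) => if (j : ℕ) < M then cplx g else 0)
    (fun j => if h : (j : ℕ) < K then ⟨G ⟨j, h⟩, hle _⟩ else ⟨0, by omega⟩)
    ?_ hg0 ?_ ?_ ?_
  · convert this using 3 with j
    split_ifs with h
    · rfl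
    · ext x
      simp [cplx]
  · intro j x
    split_ifs with h
    · exact hf0 _ _
    · simp
  · intro j x
    split_ifs with h
    · exact hsub _ _
    · simp
  · intro j
    by_cases h : (j : ℕ) < K
    · simp [h]
    · simp [h, hM]
  · intro j j' hne hγ x
    by_cases h : (j : ℕ) < K
    · by_cases h' : (j' : ℕ) < K
      · simp only [h, h', dif_pos, Fin.mk.injEq] at hγ ⊢
        have hd := hdisj ⟨j, h⟩ ⟨j', h'⟩ (fun e => hne (Fin.ext (by simpa using e))) (Fin.ext hγ)
        by_contra! hc
        refine (Set.disjoint_left.1 hd : ∀ ⦃a⦄, _ → _) (?_ : x ∈ _) ?_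
        · rw [hfU]
          exact lt_of_le_of_ne (hf0 _ _) hc.1.symm
        · rw [hfU]
          exact lt_of_le_of_ne (hf0 _ _) hc.2.symm
      · right
        simp [h']
    · left
      simp [h]
end

section
/- Let Z be a locally compact metrizable space, let n ∈ ℕ, and let a and b be positive elements of C₀(Z, M_n(ℂ)) (continuous M_n(ℂ)-valued functions on Z vanishing at infinity) which are diagonal, i.e., a(t) = diag(a₁(t), …, a_n(t)) and b(t) = diag(b₁(t), …, b_n(t)) for continuous functions a₁, …, a_n, b₁, …, b_n : Z → [0, ∞) vanishing at infinity. For t ∈ Z write rank(a(t)) = #{i : aᵢ(t) ≠ 0} and rank(b(t)) = #{i : bᵢ(t) ≠ 0}. If rank(a(t)) ≤ (1/4)·rank(b(t)) and 4 < rank(b(t)) for every t ∈ Z, then a is Cuntz subequivalent to b in C₀(Z, M_n(ℂ)). -/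
open Filter ZeroAtInfty

theorem cauchy_det_ne {ι : Type*} [Fintype ι] [DecidableEq ι] (p q : ι → ℕ)
    (hp : Function.Injective p) (hq : Function.Injective q) :
    (Matrix.of fun i j => (1 / ((p i : ℂ) + q j + 1))).det ≠ 0 := by
  intro h0
  obtain ⟨c, hc0, hc⟩ := Matrix.exists_vecMul_eq_zero_iff.2 h0
  apply hc0
  have hne : ∀ i k : ℕ, (i : ℂ) + k + 1 ≠ 0 := fun i k => by
    exact_mod_cast Nat.succ_ne_zero (i + k)
  let N : Polynomial ℂ := ∑ i, Polynomial.C (c i) *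
    ∏ k ∈ Finset.univ.erase i, (Polynomial.X + Polynomial.C ((p k : ℂ) + 1))
  have hev : ∀ z : ℂ, N.eval z = ∑ i, c i * ∏ k ∈ Finset.univ.erase i, (z + ((p k : ℂ) + 1)) := by
    intro z
    simp only [N, Polynomial.eval_finsetSum, Polynomial.eval_mul, Polynomial.eval_C,
      Polynomial.eval_prod, Polynomial.eval_add, Polynomial.eval_X]
  have hN : N = 0 := by
    refine Polynomial.eq_zero_of_degree_lt_of_eval_index_eq_zero (s := Finset.univ)
      (v := fun j => (q j : ℂ)) (fun i _ j _ hij => hq (Nat.cast_injective hij)) ?_ ?_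
    · refine lt_of_le_of_lt (Polynomial.degree_sum_le _ _) ?_
      rw [Finset.sup_lt_iff (WithBot.bot_lt_coe _)]
      intro i _
      refine lt_of_le_of_lt (Polynomial.degree_mul_le _ _) ?_
      refine lt_of_le_of_lt (add_le_add_left Polynomial.degree_C_le _) ?_
      rw [zero_add, Polynomial.degree_prod]
      simp only [Polynomial.degree_X_add_C]
      have : 0 < Fintype.card ι := Fintype.card_pos_iff.2 ⟨i⟩
      simp only [Finset.sum_const, Finset.card_erase_of_mem (Finset.mem_univ i), Finset.card_univ]
      rw [nsmul_one]
      exact_mod_cast Nat.sub_lt this one_pos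
    · intro j _
      rw [hev]
      have hj := congrFun hc j
      simp only [Matrix.vecMul, dotProduct, Matrix.of_apply, Pi.zero_apply] at hj
      have : ∀ i, c i * ∏ k ∈ Finset.univ.erase i, ((q j : ℂ) + ((p k : ℂ) + 1))
          = (c i * (1 / ((p i : ℂ) + q j + 1))) * ∏ k, ((q j : ℂ) + ((p k : ℂ) + 1)) := by
        intro i
        rw [← Finset.mul_prod_erase Finset.univ _ (Finset.mem_univ i)]
        have := hne (p i) (q j)
        field_simp
        ring
      rw [Finset.sum_congr rfl (fun i _ => this i), ← Finset.sum_mul, hj, zero_mul]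
  funext i
  have h1 := hev (-((p i : ℂ) + 1))
  rw [hN, Polynomial.eval_zero, Finset.sum_eq_single i] at h1
  · rcases mul_eq_zero.1 h1.symm with h | h
    · exact h
    · obtain ⟨k, hk, hk0⟩ := Finset.prod_eq_zero_iff.1 h
      have : (p k : ℂ) = p i := by linear_combination hk0
      exact absurd (hp (by exact_mod_cast this)) (Finset.ne_of_mem_erase hk)
  · intro k _ hk
    rw [Finset.prod_eq_zero (i := i) (Finset.mem_erase.2 ⟨hk.symm, Finset.mem_univ _⟩) (by ring),
      mul_zero]
  · simp

theorem pointwise_solve {n : ℕ} (u v : Fin n → ℝ)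
    (h : Nat.card {i : Fin n // u i ≠ 0} ≤ Nat.card {i : Fin n // v i ≠ 0}) :
    ∃ y : Fin n → Fin n → ℂ, ∀ i j : Fin n,
      ∑ r : Fin n, (1 / (((i : ℕ) : ℂ) + ((r : ℕ) : ℂ) + 1)) * u i * v r * y r j
        = if i = j then (u i : ℂ) else 0 := by
  classical
  rw [Nat.card_eq_fintype_card, Nat.card_eq_fintype_card] at h
  obtain ⟨e⟩ := Function.Embedding.nonempty_of_card_le h
  let M : Matrix {i : Fin n // u i ≠ 0} {i : Fin n // u i ≠ 0} ℂ :=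
    Matrix.of fun i j => (1 / ((((i : Fin n) : ℕ) : ℂ) + (((e j : Fin n) : ℕ) : ℂ) + 1))
  have hM : M.det ≠ 0 := cauchy_det_ne (fun i : {i : Fin n // u i ≠ 0} => ((i : Fin n) : ℕ))
    (fun j => ((e j : Fin n) : ℕ))
    (fun i j hij => Subtype.ext (Fin.ext hij))
    (fun i j hij => e.injective (Subtype.ext (Fin.ext hij)))
  have hMM : M * M⁻¹ = 1 := Matrix.mul_nonsing_inv M (isUnit_iff_ne_zero.2 hM)
  refine ⟨fun r j => ∑ k : {i : Fin n // u i ≠ 0}, if (e k : Fin n) = r then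
    (if hj : u j ≠ 0 then M⁻¹ k ⟨j, hj⟩ / v r else 0) else 0, ?_⟩
  intro i j
  by_cases hi : u i = 0
  · simp [hi]
  simp only [Finset.mul_sum]
  rw [Finset.sum_comm]
  simp only [mul_ite, mul_zero, Finset.sum_ite_eq, Finset.mem_univ, if_true]
  by_cases hj : u j = 0
  · have : i ≠ j := fun hij => hi (hij ▸ hj)
    simp [hj, this]
  have key := congrFun (congrFun hMM ⟨i, hi⟩) ⟨j, hj⟩
  rw [Matrix.mul_apply, Matrix.one_apply] at key
  simp only [Subtype.mk.injEq] at key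
  have : (if i = j then (u i : ℂ) else 0) = u i * (if i = j then 1 else 0) := by simp
  rw [this, ← key, Finset.mul_sum]
  refine Finset.sum_congr rfl fun k _ => ?_
  have hv : (v (e k) : ℂ) ≠ 0 := by exact_mod_cast (e k).2
  simp only [ne_eq, hj, not_false_eq_true, dif_pos, M, Matrix.of_apply]
  field_simp

theorem c0_sum_apply {Z : Type*} [TopologicalSpace Z] {ι : Type*} (s : Finset ι)
    (F : ι → C₀(Z, ℂ)) (t : Z) : (∑ i ∈ s, F i) t = ∑ i ∈ s, F i t := by
  classical
  induction s using Finset.induction_on with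
  | empty => simp
  | insert i s hi ih => simp [Finset.sum_insert hi, ih]

/-- let `Z` be a locally compact metrizable space and let `a`, `b` be
positive diagonal elements of `C₀(Z, M_n(ℂ))` (realized as diagonal matrices over
`C₀(Z, ℂ)`), with diagonal entries given by nonnegative real-valued functions
`f i`, `g i`.  If `rank(a(t)) ≤ (1/4)·rank(b(t))` and `4 < rank(b(t))` for every
`t ∈ Z`, then `a ≾ b`. -/
theorem diagonal_rank_comparison {Z : Type*} [MetricSpace Z] [LocallyCompactSpace Z]
    (n : ℕ) (a b : Matrix (Fin n) (Fin n) C₀(Z, ℂ))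
    (f g : Fin n → Z → ℝ)
    (hf0 : ∀ i t, 0 ≤ f i t) (hg0 : ∀ i t, 0 ≤ g i t)
    (haf : ∀ i t, a i i t = (f i t : ℂ)) (hbg : ∀ i t, b i i t = (g i t : ℂ))
    (haod : ∀ i j, i ≠ j → a i j = 0) (hbod : ∀ i j, i ≠ j → b i j = 0)
    (hrank : ∀ t : Z,
      4 * Nat.card {i : Fin n // f i t ≠ 0} ≤ Nat.card {i : Fin n // g i t ≠ 0})
    (hrank4 : ∀ t : Z, 4 < Nat.card {i : Fin n // g i t ≠ 0}) :
    CuntzSubequiv a b := by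
  have hfc : ∀ i, Continuous (f i) := by
    intro i
    have : f i = fun t => (a i i t).re := by funext t; rw [haf]; simp
    rw [this]
    exact Complex.continuous_re.comp (map_continuous (a i i))
  have hgc : ∀ i, Continuous (g i) := by
    intro i
    have : g i = fun t => (b i i t).re := by funext t; rw [hbg]; simp
    rw [this]
    exact Complex.continuous_re.comp (map_continuous (b i i))
  have hf_inf : ∀ i, Tendsto (f i) (cocompact Z) (nhds 0) := by
    intro i
    have : f i = fun t => (a i i t).re := by funext t; rw [haf]; simp
    rw [this]
    exact (Complex.continuous_re.tendsto 0).comp (zero_at_infty (a i i))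
  have haij : ∀ i j t, a i j t = if i = j then (f i t : ℂ) else 0 := by
    intro i j t
    split_ifs with h
    · rw [← h, haf]
    · rw [haod i j h]; rfl
  let S : Z → (Fin n → Fin n → ℂ) → Fin n → Fin n → ℂ := fun t y i j =>
    ∑ r : Fin n, (1 / (((i : ℕ) : ℂ) + ((r : ℕ) : ℂ) + 1)) * f i t * g r t * y r j
  have hSc : ∀ y i j, Continuous fun t => S t y i j := by
    intro y i j
    refine continuous_finsetSum _ fun r _ => ?_
    have := hfc i
    have := hgc r
    fun_prop
  -- approximate solution
  have main : ∀ ε : ℝ, 0 < ε → ∃ y : Fin n → Fin n → C₀(Z, ℂ), ∀ t i j,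
      ‖S t (fun r j => y r j t) i j - a i j t‖ < ε := by
    intro ε hε
    let T : Z → Set (Fin n → Fin n → ℂ) := fun t =>
      {y | (∀ i j, S t y i j - a i j t ∈ Metric.ball (0 : ℂ) ε) ∧ ((∀ i, f i t < ε / 2) → y = 0)}
    have hT : ∀ t, Convex ℝ (T t) := by
      intro t y hy z hz α β hα hβ hαβ
      refine ⟨fun i j => ?_, fun h => ?_⟩
      · have := convex_ball (0 : ℂ) ε (hy.1 i j) (hz.1 i j) hα hβ hαβ
        convert this using 1
        have h1 : S t (α • y + β • z) i j = α • S t y i j + β • S t z i j := by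
          simp only [S, Finset.smul_sum, ← Finset.sum_add_distrib]
          refine Finset.sum_congr rfl fun r _ => ?_
          simp only [Pi.add_apply, Pi.smul_apply, Complex.real_smul]
          ring
        have h2 : (α : ℂ) + β = 1 := by exact_mod_cast hαβ
        rw [h1]
        simp only [Complex.real_smul]
        linear_combination (a i j t) * h2
      · rw [hy.2 h, hz.2 h]; simp
    have hloc : ∀ t, ∃ c : Fin n → Fin n → ℂ, ∀ᶠ s in nhds t, c ∈ T s := by
      intro t
      have hball : ∀ c : Fin n → Fin n → ℂ,
          (∀ i j, S t c i j - a i j t ∈ Metric.ball (0 : ℂ) ε) →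
          ∀ᶠ s in nhds t, ∀ i j, S s c i j - a i j s ∈ Metric.ball (0 : ℂ) ε := by
        intro c hc
        rw [eventually_all]; intro i
        rw [eventually_all]; intro j
        exact ((hSc c i j).sub (map_continuous (a i j))).continuousAt.eventually_mem
          (Metric.isOpen_ball.mem_nhds (hc i j))
      by_cases h : ∀ i, f i t < ε
      · refine ⟨0, ?_⟩
        refine (hball 0 ?_).mono fun s hs => ⟨hs, fun _ => rfl⟩
        · intro i j
          have : S t 0 i j = 0 := by simp [S]
          rw [this, haij, mem_ball_zero_iff, zero_sub, norm_neg]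
          split_ifs
          · rw [Complex.norm_real, Real.norm_of_nonneg (hf0 i t)]; exact h i
          · simpa using hε
      · push Not at h
        obtain ⟨i₀, hi₀⟩ := h
        obtain ⟨c, hc⟩ := pointwise_solve (fun i => f i t) (fun i => g i t)
          (by have := hrank t; omega)
        refine ⟨c, ?_⟩
        have h2 : ∀ᶠ s in nhds t, ε / 2 < f i₀ s :=
          (hfc i₀).continuousAt.eventually_const_lt (by linarith)
        refine ((hball c ?_).and h2).mono fun s hs =>
          ⟨hs.1, fun h => absurd (h i₀) (not_lt.2 hs.2.le)⟩
        · intro i j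
          have : S t c i j = a i j t := by rw [haij]; exact hc i j
          rw [this, sub_self]
          exact Metric.mem_ball_self hε
    obtain ⟨y, hy⟩ := exists_continuous_forall_mem_convex_of_local_const hT hloc
    have hyc : ∀ r j, Continuous fun t => y t r j := fun r j =>
      (continuous_apply j).comp ((continuous_apply r).comp y.continuous)
    have hev : ∀ᶠ t in cocompact Z, ∀ i, f i t < ε / 2 := by
      rw [eventually_all]; intro i
      exact (hf_inf i).eventually_lt_const (by linarith)
    refine ⟨fun r j => ⟨⟨fun t => y t r j, hyc r j⟩, ?_⟩, ?_⟩
    · refine tendsto_const_nhds.congr' ?_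
      filter_upwards [hev] with t ht
      simp [(hy t).2 ht]
    · intro t i j
      have := (hy t).1 i j
      rw [mem_ball_zero_iff] at this
      exact this
  choose Y hY using fun k : ℕ => main (1 / ((k : ℝ) + 1)) (by positivity)
  refine ⟨fun _ => Matrix.of fun i r : Fin n => (1 / (((i : ℕ) : ℂ) + ((r : ℕ) : ℂ) + 1)) • a i i,
    fun k => Matrix.of (Y k), ?_⟩
  refine tendsto_pi_nhds.2 fun i => tendsto_pi_nhds.2 fun j => ?_
  rw [ZeroAtInftyContinuousMap.tendsto_iff_tendstoUniformly, Metric.tendstoUniformly_iff]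
  intro ε hε
  filter_upwards [(tendsto_one_div_add_atTop_nhds_zero_nat (𝕜 := ℝ)).eventually_lt_const hε]
    with k hk t
  rw [dist_comm, dist_eq_norm]
  refine lt_trans ?_ hk
  refine lt_of_eq_of_lt (congrArg (fun z => ‖z - a i j t‖) ?_) (hY k t i j)
  rw [Matrix.mul_apply, c0_sum_apply]
  refine Finset.sum_congr rfl fun r _ => ?_
  rw [Matrix.mul_apply, Finset.sum_eq_single r]
  · simp [haf, hbg, mul_assoc]
  · intro k _ hk
    rw [hbod k r hk, mul_zero]
  · simp
end

section
/- Let T be an action of ℤ^d on a nonempty compact metric space X, let E' ⊆ X be closed and F ⊆ X open, and suppose that 4·μ(E') < μ(F) for every T-invariant Borel probability measure μ on X. Then there exists N ∈ ℕ such that for every integer M > N and every x ∈ X, 4·#{m ∈ {0,1,…,M−1}^d : T^{-m}x ∈ E'} < #{m ∈ {0,1,…,M−1}^d : T^{-m}x ∈ F}. -/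
open MeasureTheory

/-- The empirical measure of a finite family of points. -/
noncomputable def empMeas {ι X : Type*} [MeasurableSpace X] (Q : Finset ι) (y : ι → X) :
    Measure X :=
  ((Q.card : ENNReal)⁻¹) • ∑ m ∈ Q, Measure.dirac (y m)

lemma empMeas_prob {ι X : Type*} [MeasurableSpace X] (Q : Finset ι) (hQ : Q.Nonempty)
    (y : ι → X) : IsProbabilityMeasure (empMeas Q y) := by
  constructor
  have h : (Q.card : ENNReal) ≠ 0 := by
    simpa using hQ.ne_empty
  simp [empMeas, ENNReal.inv_mul_cancel h (ENNReal.natCast_ne_top _)]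

open Classical in
lemma empMeas_apply {ι X : Type*} [MeasurableSpace X] (Q : Finset ι)
    (y : ι → X) (S : Set X) (hS : MeasurableSet S) :
    empMeas Q y S = (Q.card : ENNReal)⁻¹ * ((Q.filter fun m => y m ∈ S).card : ENNReal) := by
  simp [empMeas, Measure.dirac_apply' _ hS, Set.indicator_apply, Finset.sum_boole]

lemma empMeas_integral {ι X : Type*} [TopologicalSpace X] [MeasurableSpace X] [BorelSpace X]
    (Q : Finset ι) (y : ι → X) (f : BoundedContinuousFunction X ℝ) :
    ∫ z, f z ∂(empMeas Q y) = (Q.card : ℝ)⁻¹ * ∑ m ∈ Q, f (y m) := by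
  have hm : StronglyMeasurable (f : X → ℝ) := f.continuous.measurable.stronglyMeasurable
  rw [empMeas, integral_smul_measure, integral_finsetSum_measure]
  · simp [integral_dirac' _ _ hm]
  · intro i _
    exact (integrable_dirac' hm (by simp))

/-- The box `{a, …, b-1}^d`. -/
noncomputable def zbox (d : ℕ) (a b : ℤ) : Finset (Fin d → ℤ) :=
  Fintype.piFinset fun _ => Finset.Ico a b

lemma mem_zbox {d : ℕ} {a b : ℤ} {m : Fin d → ℤ} :
    m ∈ zbox d a b ↔ ∀ i, a ≤ m i ∧ m i < b := by
  simp [zbox, Fintype.mem_piFinset]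

lemma card_zbox (d : ℕ) (a b : ℤ) : (zbox d a b).card = (b - a).toNat ^ d := by
  simp [zbox]

/-- Sums of a bounded function over two finite sets of equal size with a common subset. -/
lemma sum_diff_bound {ι : Type*} [DecidableEq ι] (A Q B : Finset ι) (hA : B ⊆ A) (hQ : B ⊆ Q)
    (hc : A.card = Q.card) (g : ι → ℝ) (C : ℝ) (hg : ∀ m, |g m| ≤ C) :
    |∑ m ∈ A, g m - ∑ m ∈ Q, g m| ≤ 2 * C * ((Q.card : ℝ) - B.card) := by
  have key : ∀ S : Finset ι, B ⊆ S → |∑ m ∈ S, g m - ∑ m ∈ B, g m| ≤ C * (S.card - B.card) := by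
    intro S hS
    rw [← Finset.sum_sdiff hS, add_sub_cancel_right]
    refine (Finset.abs_sum_le_sum_abs _ _).trans ?_
    refine (Finset.sum_le_card_nsmul _ _ C fun m _ => hg m).trans ?_
    rw [nsmul_eq_mul, Finset.card_sdiff_of_subset hS, Nat.cast_sub (Finset.card_le_card hS),
      mul_comm]
  have h1 := key A hA
  have h2 := key Q hQ
  rw [hc] at h1
  rw [abs_le] at *
  constructor <;> linarith [h1.1, h1.2, h2.1, h2.2]

lemma shift_bound {d : ℕ} (n : Fin d → ℤ) (K : ℕ) (hK : ∀ i, |n i| ≤ K) (M : ℕ) (hM : 2 * K ≤ M)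
    (g : (Fin d → ℤ) → ℝ) (C : ℝ) (hg : ∀ m, |g m| ≤ C) :
    |∑ m ∈ zbox d 0 M, g (m + n) - ∑ m ∈ zbox d 0 M, g m| ≤
      2 * C * ((M : ℝ) ^ d - ((M : ℝ) - 2 * K) ^ d) := by
  classical
  have h := sum_diff_bound ((zbox d 0 M).map (addRightEmbedding n)) (zbox d 0 M)
    (zbox d K (M - K)) ?_ ?_ (by simp) g C hg
  · rw [Finset.sum_map, card_zbox, card_zbox] at h
    have e : ((M : ℤ) - K - K).toNat = M - 2 * K := by omega
    rw [e] at h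
    simpa [Nat.cast_sub hM] using h
  · intro m hm
    rw [mem_zbox] at hm
    rw [Finset.mem_map]
    refine ⟨m - n, ?_, by simp⟩
    rw [mem_zbox]
    intro i
    have := hm i
    have := abs_le.1 (hK i)
    simp only [Pi.sub_apply]
    omega
  · intro m hm
    rw [mem_zbox] at hm ⊢
    intro i
    have := hm i
    omega

open Filter Topology in
lemma ratio_tendsto (d K : ℕ) (C : ℝ) :
    Tendsto (fun M : ℕ => ((M : ℝ) ^ d)⁻¹ * (2 * C * ((M : ℝ) ^ d - ((M : ℝ) - 2 * K) ^ d)))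
      atTop (𝓝 0) := by
  have h1 : Tendsto (fun M : ℕ => 2 * C * (1 - (1 - 2 * (K : ℝ) / (M : ℝ)) ^ d))
      atTop (𝓝 (2 * C * (1 - (1 - 0) ^ d))) :=
    (((tendsto_const_div_atTop_nhds_zero_nat (2 * (K : ℝ))).const_sub 1).pow d
      |>.const_sub 1).const_mul _
  simp only [sub_zero, one_pow, sub_self, mul_zero] at h1
  refine h1.congr' ?_
  filter_upwards [eventually_gt_atTop 0] with M hM
  have hM' : (M : ℝ) ≠ 0 := by positivity
  have : (M : ℝ) - 2 * K = M * (1 - 2 * (K : ℝ) / M) := by field_simp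
  rw [this, mul_pow]
  field_simp

open Classical in
lemma natCard_eq {X : Type*} (d M : ℕ) (y : (Fin d → ℤ) → X) (S : Set X) :
    Nat.card {m : Fin d → ℤ // (∀ i, 0 ≤ m i ∧ m i < (M : ℤ)) ∧ y m ∈ S} =
      ((zbox d 0 M).filter fun m => y m ∈ S).card := by
  rw [← Nat.card_eq_finsetCard]
  exact Nat.card_congr (Equiv.subtypeEquivRight fun m => by simp [mem_zbox])

/-- let `T` be a `ℤ^d`-action on a nonempty compact metric space `X`,
`E' ⊆ X` closed, `F ⊆ X` open, with `4·μ(E') < μ(F)` for every `T`-invariant Borel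
probability measure `μ`.  Then there is `N ∈ ℕ` such that for all `M > N` and all
`x ∈ X`, `4·#{m ∈ {0,…,M-1}^d : T^{-m} x ∈ E'} < #{m ∈ {0,…,M-1}^d : T^{-m} x ∈ F}`. -/
theorem uniform_orbit_frequency_comparison {X : Type*} [MetricSpace X] [CompactSpace X]
    [Nonempty X] [MeasurableSpace X] [BorelSpace X]
    (d : ℕ) (hd : 1 ≤ d) (T : (Fin d → ℤ) → X → X)
    (hTc : ∀ n, Continuous (T n)) (hT0 : ∀ x, T 0 x = x)
    (hTadd : ∀ m n x, T (m + n) x = T m (T n x))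
    (E' F : Set X) (hE' : IsClosed E') (hF : IsOpen F)
    (hmeas : ∀ μ : Measure X, IsProbabilityMeasure μ →
      (∀ (n : Fin d → ℤ) (B : Set X), MeasurableSet B → μ (T n '' B) = μ B) →
      4 * μ E' < μ F) :
    ∃ N : ℕ, ∀ M : ℕ, N < M → ∀ x : X,
      4 * Nat.card {m : Fin d → ℤ // (∀ i, 0 ≤ m i ∧ m i < (M : ℤ)) ∧ T (-m) x ∈ E'} <
        Nat.card {m : Fin d → ℤ // (∀ i, 0 ≤ m i ∧ m i < (M : ℤ)) ∧ T (-m) x ∈ F} := by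
  classical
  by_contra hcon
  push Not at hcon
  choose M hM x hx using hcon
  have hMtop : Filter.Tendsto M Filter.atTop Filter.atTop :=
    Filter.tendsto_atTop_mono (fun N => (hM N).le) Filter.tendsto_id
  have hpos : ∀ N, 0 < M N := fun N => (Nat.zero_le N).trans_lt (hM N)
  let Q : ℕ → Finset (Fin d → ℤ) := fun N => zbox d 0 (M N)
  have hQc : ∀ N, (Q N).card = M N ^ d := fun N => by simp [Q, card_zbox]
  have hQ : ∀ N, (Q N).Nonempty := fun N => by
    rw [← Finset.card_pos, hQc]
    exact pow_pos (hpos N) d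
  let y : ℕ → (Fin d → ℤ) → X := fun N m => T (-m) (x N)
  let μs : ℕ → ProbabilityMeasure X := fun N => ⟨empMeas (Q N) (y N), empMeas_prob _ (hQ N) _⟩
  let U : Ultrafilter ℕ := Filter.hyperfilter ℕ
  have hU : (U : Filter ℕ) ≤ Filter.atTop := by
    rw [← Nat.cofinite_eq_atTop]
    exact Filter.hyperfilter_le_cofinite
  obtain ⟨μ, -, hμ⟩ := isCompact_univ.ultrafilter_le_nhds (U.map μs) (by simp)
  have hlim : Filter.Tendsto μs U (nhds μ) := hμ
  have hint := ProbabilityMeasure.tendsto_iff_forall_integral_tendsto.1 hlim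
  -- invariance
  have hinv : ∀ n : Fin d → ℤ, (μ : Measure X).map (T n) = μ := by
    intro n
    have : IsProbabilityMeasure ((μ : Measure X).map (T n)) :=
      Measure.isProbabilityMeasure_map (hTc n).measurable.aemeasurable
    apply ext_of_forall_integral_eq_of_IsFiniteMeasure
    intro f
    rw [integral_map (hTc n).measurable.aemeasurable
      f.continuous.measurable.aestronglyMeasurable]
    let f' : BoundedContinuousFunction X ℝ := f.compContinuous ⟨T n, hTc n⟩
    have h1 := hint f
    have h2 := hint f'
    have h3 : Filter.Tendsto (fun N => ∫ z, f' z ∂(μs N : Measure X) - ∫ z, f z ∂(μs N : Measure X))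
        U (nhds 0) := by
      obtain ⟨K, hK⟩ : ∃ K : ℕ, ∀ i, |(-n) i| ≤ K := by
        refine ⟨∑ i, ((-n) i).natAbs, fun i => ?_⟩
        have := Finset.single_le_sum (f := fun i => ((-n) i).natAbs) (fun _ _ => Nat.zero_le _)
          (Finset.mem_univ i)
        rw [Int.abs_eq_natAbs]
        exact_mod_cast this
      have hr := ((ratio_tendsto d K ‖f‖).comp hMtop).mono_left hU
      refine squeeze_zero_norm' ?_ hr
      have hev : ∀ᶠ N in (U : Filter ℕ), 2 * K ≤ M N :=
        hU (hMtop.eventually_ge_atTop (2 * K))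
      filter_upwards [hev] with N hN
      have e1 : ∫ z, f' z ∂(μs N : Measure X) = _ := empMeas_integral (Q N) (y N) f'
      have e2 : ∫ z, f z ∂(μs N : Measure X) = _ := empMeas_integral (Q N) (y N) f
      rw [e1, e2, ← mul_sub, norm_mul, hQc]
      have hb := shift_bound (-n) K hK (M N) hN (fun m => f (y N m)) ‖f‖
        (fun m => f.norm_coe_le_norm _)
      have e3 : ∀ m, f' (y N m) = f (y N (m + -n)) := by
        intro m
        change f (T n (T (-m) (x N))) = f (T (-(m + -n)) (x N))
        rw [← hTadd]
        congr 2
        abel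
      simp only [e3]
      simp only [Function.comp, Nat.cast_pow, norm_inv, norm_pow, Real.norm_natCast]
      exact mul_le_mul_of_nonneg_left hb (by positivity)
    have h4 := tendsto_nhds_unique h3 (h2.sub h1)
    change ∫ z, f' z ∂(μ : Measure X) = _
    linarith
  have hlt := hmeas μ inferInstance (by
    intro n B hB
    have : T n '' B = T (-n) ⁻¹' B := by
      ext z
      constructor
      · rintro ⟨w, hw, rfl⟩
        simpa [← hTadd, hT0] using hw
      · intro hz
        exact ⟨T (-n) z, hz, by rw [← hTadd]; simp [hT0]⟩
    rw [this, ← Measure.map_apply (hTc (-n)).measurable hB, hinv])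
  have hE := ProbabilityMeasure.limsup_measure_closed_le_of_tendsto hlim hE'
  have hF' := ProbabilityMeasure.le_liminf_measure_open_of_tendsto hlim hF
  have hbad : ∀ N, (μs N : Measure X) F ≤ 4 * (μs N : Measure X) E' := by
    intro N
    have e1 : (μs N : Measure X) F = _ := empMeas_apply (Q N) (y N) F hF.measurableSet
    have e2 : (μs N : Measure X) E' = _ := empMeas_apply (Q N) (y N) E' hE'.measurableSet
    have h := hx N
    rw [natCard_eq d (M N) (y N) F, natCard_eq d (M N) (y N) E'] at h
    rw [e1, e2, mul_left_comm]
    gcongr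
    exact_mod_cast h
  refine absurd hlt (not_lt.2 ?_)
  calc (μ : Measure X) F ≤ _ := hF'
    _ ≤ Filter.limsup (fun N => (μs N : Measure X) F) U := Filter.liminf_le_limsup
    _ ≤ Filter.limsup (fun N => 4 * (μs N : Measure X) E') U :=
        Filter.limsup_le_limsup (Filter.Eventually.of_forall hbad)
    _ = 4 * Filter.limsup (fun N => (μs N : Measure X) E') U :=
        ENNReal.limsup_const_mul_of_ne_top (by simp)
    _ ≤ 4 * (μ : Measure X) E' := by gcongr
end

section
/- Let T be a minimal action of ℤ^d on a nonempty compact metric space X and let F ⊆ X be a nonempty open set. Then there exist δ > 0 and N ∈ ℕ such that for every integer M ≥ N and every x ∈ X, #{m ∈ {0,1,…,M−1}^d : T^{-m}x ∈ F} > δ·M^d. -/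
/-- let `T` be a minimal `ℤ^d`-action on a nonempty compact metric space
`X` and let `F ⊆ X` be a nonempty open set.  Then there exist `δ > 0` and `N ∈ ℕ` such
that for every `M ≥ N` and every `x ∈ X`,
`#{m ∈ {0,…,M-1}^d : T^{-m} x ∈ F} > δ·M^d`. -/
theorem minimal_orbit_hitting_density {X : Type*} [MetricSpace X] [CompactSpace X]
    [Nonempty X]
    (d : ℕ) (hd : 1 ≤ d) (T : (Fin d → ℤ) → X → X)
    (hTc : ∀ n, Continuous (T n)) (hT0 : ∀ x, T 0 x = x)
    (hTadd : ∀ m n x, T (m + n) x = T m (T n x))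
    (hmin : ∀ x : X, Dense (Set.range fun n : Fin d → ℤ => T n x))
    (F : Set X) (hF : IsOpen F) (hFne : F.Nonempty) :
    ∃ δ : ℝ, 0 < δ ∧ ∃ N : ℕ, ∀ M : ℕ, N ≤ M → ∀ x : X,
      δ * (M : ℝ) ^ d <
        (Nat.card {m : Fin d → ℤ // (∀ i, 0 ≤ m i ∧ m i < (M : ℤ)) ∧ T (-m) x ∈ F} : ℝ) := by
  classical
  -- Step 1: compactness gives a finite set of translates hitting `F`.
  obtain ⟨S, hS⟩ := isCompact_univ.elim_finite_subcover
    (fun n : Fin d → ℤ => (T n) ⁻¹' F) (fun n => hF.preimage (hTc n)) (by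
      intro x _
      obtain ⟨y, hyF, n, rfl⟩ := (hmin x).inter_open_nonempty F hF hFne
      exact Set.mem_iUnion.2 ⟨n, hyF⟩)
  have hS' : ∀ x : X, ∃ n ∈ S, T n x ∈ F := by
    intro x
    simpa using hS (Set.mem_univ x)
  -- Step 2: a bound for the entries.
  obtain ⟨K, hK⟩ : ∃ K : ℕ, ∀ n ∈ S, ∀ i, |n i| ≤ (K : ℤ) := by
    refine ⟨S.sup fun n => Finset.univ.sup fun i => (n i).natAbs, fun n hn i => ?_⟩
    have h1 : (n i).natAbs ≤ Finset.univ.sup fun i => (n i).natAbs :=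
      Finset.le_sup (f := fun i => (n i).natAbs) (Finset.mem_univ i)
    have h2 := Finset.le_sup (f := fun n : Fin d → ℤ =>
      Finset.univ.sup fun i => (n i).natAbs) hn
    rw [Int.abs_eq_natAbs]
    exact_mod_cast h1.trans h2
  obtain ⟨L, hL⟩ : ∃ L : ℕ, L = 2 * K + 1 := ⟨_, rfl⟩
  have hLpos : 0 < L := by omega
  have hLR : (0 : ℝ) < L := by exact_mod_cast hLpos
  refine ⟨(1 / (2 * (L : ℝ))) ^ d, by positivity, L, fun M hM x => ?_⟩
  obtain ⟨Q, hQ⟩ : ∃ Q : ℕ, Q = M / L := ⟨_, rfl⟩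
  have hQ1 : 1 ≤ Q := by rw [hQ]; exact (Nat.one_le_div_iff hLpos).2 hM
  have hQL : L * Q ≤ M := by rw [hQ]; exact Nat.mul_div_le M L
  have hMQ : M < 2 * L * Q := by
    have h : M < L * (Q + 1) := by rw [hQ]; exact Nat.lt_mul_div_succ M hLpos
    nlinarith
  -- Step 3: one hit in every block.
  have key : ∀ q : Fin d → Fin Q, ∃ m : Fin d → ℤ,
      (∀ i, (L : ℤ) * ((q i : ℕ) : ℤ) ≤ m i ∧ m i < (L : ℤ) * ((q i : ℕ) : ℤ) + L) ∧
        T (-m) x ∈ F := by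
    intro q
    obtain ⟨n, hn, hnF⟩ := hS' (T (-(fun i => (L : ℤ) * ((q i : ℕ) : ℤ) + K)) x)
    refine ⟨(fun i => (L : ℤ) * ((q i : ℕ) : ℤ) + K) - n, fun i => ?_, ?_⟩
    · have := abs_le.1 (hK n hn i)
      simp only [Pi.sub_apply]
      constructor
      · linarith
      · have : (L : ℤ) = 2 * K + 1 := by exact_mod_cast hL
        linarith
    · rw [← hTadd] at hnF
      rwa [neg_sub, sub_eq_add_neg]
  choose m hm hmF using key
  have hfin : Finite {m : Fin d → ℤ // (∀ i, 0 ≤ m i ∧ m i < (M : ℤ)) ∧ T (-m) x ∈ F} := by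
    apply Set.Finite.subset (Set.Finite.pi' fun _ : Fin d => Set.finite_Ico (0 : ℤ) M)
    intro m hm i
    exact hm.1 i
  have hbox : ∀ q i, 0 ≤ m q i ∧ m q i < (M : ℤ) := by
    intro q i
    obtain ⟨h1, h2⟩ := hm q i
    have h3 : L * (q i : ℕ) + L ≤ M := by
      have : L * ((q i : ℕ) + 1) ≤ L * Q := Nat.mul_le_mul_left L (q i).isLt
      linarith
    have h4 : (L : ℤ) * ((q i : ℕ) : ℤ) + L ≤ M := by exact_mod_cast h3
    exact ⟨le_trans (by positivity) h1, by linarith⟩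
  have hcard := Nat.card_le_card_of_injective
    (fun q : Fin d → Fin Q =>
      (⟨m q, hbox q, hmF q⟩ :
        {m : Fin d → ℤ // (∀ i, 0 ≤ m i ∧ m i < (M : ℤ)) ∧ T (-m) x ∈ F}))
    (by
      intro q q' h
      have h' : m q = m q' := congrArg Subtype.val h
      funext i
      obtain ⟨a1, a2⟩ := hm q i
      obtain ⟨b1, b2⟩ := hm q' i
      rw [h'] at a1 a2
      have hLZ : (0 : ℤ) < L := by exact_mod_cast hLpos
      have c1 : ((q i : ℕ) : ℤ) < ((q' i : ℕ) : ℤ) + 1 := by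
        apply lt_of_mul_lt_mul_left _ hLZ.le
        linarith
      have c2 : ((q' i : ℕ) : ℤ) < ((q i : ℕ) : ℤ) + 1 := by
        apply lt_of_mul_lt_mul_left _ hLZ.le
        linarith
      apply Fin.ext
      omega)
  have hcQ : Nat.card (Fin d → Fin Q) = Q ^ d := by simp
  rw [hcQ] at hcard
  have hcardR : (Q : ℝ) ^ d ≤
      (Nat.card {m : Fin d → ℤ // (∀ i, 0 ≤ m i ∧ m i < (M : ℤ)) ∧ T (-m) x ∈ F} : ℝ) := by
    exact_mod_cast hcard
  refine lt_of_lt_of_le ?_ hcardR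
  rw [← mul_pow]
  apply pow_lt_pow_left₀ _ (by positivity) (by omega)
  have hMQR : (M : ℝ) < 2 * L * Q := by exact_mod_cast hMQ
  rw [one_div, inv_mul_lt_iff₀ (by positivity)]
  exact hMQR
end
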